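/- arXiv:2605.07459 — 10 statements merged into one kernel-verified Lean document; each statement's English description precedes it below -/
import Mathlib

section
/- The robust Bellman optimality operator is a γ-contraction in the sup norm: for all u, v : S → ℝ, ‖Tu − Tv‖∞ ≤ γ‖u − v‖∞. -/
/-- The robust expected continuation value: `max_{p ∈ P} ∑_t p t * v t`
(the maximum is attained, by compactness; we use `sSup`). -/
noncomputable def robustSup {S : Type*} [Fintype S] (P : Set (S → ℝ)) (v : S → ℝ) : ℝ :=
  sSup ((fun p => ∑ t, p t * v t) '' P)

/-- The robust Bellman optimality operator
`(T v)(s) = c(s) + γ · min_{a ∈ A} max_{p ∈ P(s,a)} ∑_t p(t) v(t)`. -/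
noncomputable def bellmanT {S A : Type*} [Fintype S] [Fintype A] [Nonempty A]
    (c : S → ℝ) (γ : ℝ) (P : S → A → Set (S → ℝ)) (v : S → ℝ) : S → ℝ :=
  fun s => c s + γ * Finset.univ.inf' Finset.univ_nonempty (fun a => robustSup (P s a) v)

/-!
Pointwise suprema and finite minima of `K`-Lipschitz functions are `K`-Lipschitz. A linear
functional on `S → ℝ` with coefficient vector `p` has sup-norm Lipschitz constant `∑ t, |p t|`,
which is `1` on the simplex, so the min-max of expectations is nonexpansive and only the factor
`γ` remains.
-/

section Lipschitz

open scoped NNReal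

theorem lipschitzWith_sum_mul {ι : Type*} [Fintype ι] {p : ι → ℝ} {K : ℝ≥0}
    (hp : ∑ i, |p i| ≤ K) : LipschitzWith K fun v : ι → ℝ => ∑ i, p i * v i := by
  refine lipschitzWith_iff_dist_le_mul.2 fun u v => ?_
  calc |∑ i, p i * u i - ∑ i, p i * v i|
      = |∑ i, p i * (u i - v i)| := by simp only [mul_sub, Finset.sum_sub_distrib]
    _ ≤ ∑ i, |p i| * |u i - v i| := by
      simpa only [abs_mul] using
        Finset.abs_sum_le_sum_abs (fun i => p i * (u i - v i)) Finset.univ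
    _ ≤ ∑ i, |p i| * dist u v := by
      gcongr with i
      exact dist_le_pi_dist u v i
    _ = (∑ i, |p i|) * dist u v := (Finset.sum_mul ..).symm
    _ ≤ K * dist u v := by gcongr

section PseudoMetric

variable {ι X : Type*} [PseudoMetricSpace X] {f : ι → X → ℝ} {K : ℝ≥0}

theorem lipschitzWith_sSup_image {s : Set ι} (hs : s.Nonempty)
    (hbdd : ∀ x, BddAbove ((f · x) '' s)) (hf : ∀ i ∈ s, LipschitzWith K (f i)) :
    LipschitzWith K fun x => sSup ((f · x) '' s) := by
  refine LipschitzWith.of_le_add_mul K fun x y => csSup_le (hs.image _) ?_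
  rintro _ ⟨i, hi, rfl⟩
  calc f i x ≤ f i y + K * dist x y := (hf i hi).le_add_mul x y
    _ ≤ sSup ((f · y) '' s) + K * dist x y := by
      gcongr
      exact le_csSup (hbdd y) (Set.mem_image_of_mem _ hi)

theorem lipschitzWith_finset_inf' {s : Finset ι} (hs : s.Nonempty)
    (hf : ∀ i ∈ s, LipschitzWith K (f i)) : LipschitzWith K fun x => s.inf' hs (f · x) := by
  have hinf : LipschitzWith K (s.inf' hs f) :=
    Finset.inf'_induction hs f (fun _ hg _ hh => max_self K ▸ hg.min hh) hf
  convert hinf using 2 with x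
  exact (Finset.inf'_apply hs f x).symm

end PseudoMetric

theorem lipschitzWith_robustSup {S : Type*} [Fintype S] {P : Set (S → ℝ)} {K : ℝ≥0}
    (hne : P.Nonempty) (hP : ∀ p ∈ P, ∑ t, |p t| ≤ K) : LipschitzWith K (robustSup P) := by
  have hlip : ∀ p ∈ P, LipschitzWith K fun v : S → ℝ => ∑ t, p t * v t :=
    fun p hp => lipschitzWith_sum_mul (hP p hp)
  refine lipschitzWith_sSup_image hne (fun v => ⟨K * dist v 0, ?_⟩) hlip
  rintro _ ⟨p, hp, rfl⟩
  simpa using (hlip p hp).le_add_mul v 0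

theorem robust_bellman_contraction_general {S A : Type*} [Fintype S] [Fintype A] [Nonempty A]
    (c : S → ℝ) (γ : ℝ) (K : ℝ≥0) (P : S → A → Set (S → ℝ))
    (hne : ∀ s a, (P s a).Nonempty) (hP : ∀ s a, ∀ p ∈ P s a, ∑ t, |p t| ≤ K) :
    LipschitzWith (‖γ‖₊ * K) (bellmanT c γ P) := by
  refine lipschitzWith_iff_dist_le_mul.2 fun u v => (dist_pi_le_iff (by positivity)).2 fun s => ?_
  have hmin : LipschitzWith K fun w =>
      Finset.univ.inf' Finset.univ_nonempty (fun a => robustSup (P s a) w) :=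
    lipschitzWith_finset_inf' _ fun a _ => lipschitzWith_robustSup (hne s a) (hP s a)
  simpa only [bellmanT, dist_add_left, smul_eq_mul, Function.comp_apply] using
    ((lipschitzWith_smul γ).comp hmin).dist_le_mul u v

end Lipschitz

/-- The robust Bellman optimality operator is a `γ`-contraction in the sup norm. -/
theorem robust_bellman_contraction {S A : Type*}
    [Fintype S] [Nonempty S] [Fintype A] [Nonempty A]
    (c : S → ℝ) (γ : ℝ) (hγ0 : 0 ≤ γ) (hγ1 : γ < 1)
    (P : S → A → Set (S → ℝ))
    (hne : ∀ s a, (P s a).Nonempty)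
    (hcpt : ∀ s a, IsCompact (P s a))
    (hsimplex : ∀ s a, ∀ p ∈ P s a, (∀ t, 0 ≤ p t) ∧ ∑ t, p t = 1) :
    ∀ u v : S → ℝ, ‖bellmanT c γ P u - bellmanT c γ P v‖ ≤ γ * ‖u - v‖ := by
  have hnorm : ∀ s a, ∀ p ∈ P s a, ∑ t, |p t| ≤ 1 := fun s a p hp => by
    simp only [abs_of_nonneg ((hsimplex s a p hp).1 _), (hsimplex s a p hp).2, le_refl]
  simpa [abs_of_nonneg hγ0] using
    fun u v => (robust_bellman_contraction_general c γ 1 P hne hnorm).norm_sub_le u v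
end

section
/- Let v* be the unique fixed point of the robust Bellman optimality operator T. For every agent policy σ : S → A and every value vector v^σ for σ, one has v*(s) ≤ v^σ(s) for every state s ∈ S. -/
/-!
Evaluating a fixed policy is a Bellman operator that is monotone and discounts added constants, so
a subsolution lies below every supersolution: at a state where `u - w` attains its maximum `d`, the
Bellman inequalities give `d ≤ γ * d`, which forces `d ≤ 0`. A fixed point of the optimality
operator is a subsolution for every policy, since a minimum over actions is at most the value at
the action chosen.
-/

theorem le_of_le_map_of_map_le_of_discounting {S : Type*} [Finite S] {T : (S → ℝ) → S → ℝ} {γ : ℝ}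
    (hγ : γ < 1) (hmono : Monotone T)
    (hdisc : ∀ v k, 0 ≤ k → ∀ s, T (fun t => v t + k) s ≤ T v s + γ * k)
    {u w : S → ℝ} (hu : u ≤ T u) (hw : T w ≤ w) : u ≤ w := by
  by_contra hle
  obtain ⟨s, hs⟩ : ∃ s, w s < u s := by simpa only [Pi.le_def, not_forall, not_le] using hle
  have : Nonempty S := ⟨s⟩
  obtain ⟨m, hm⟩ := Finite.exists_max (fun t => u t - w t)
  set d := u m - w m
  have hd_pos : 0 < d := (sub_pos.2 hs).trans_le (hm s)
  have hu_le : u ≤ fun t => w t + d := fun t => sub_le_iff_le_add'.1 (hm t)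
  have hum : u m ≤ w m + γ * d := calc
    u m ≤ T u m := hu m
    _ ≤ T (fun t => w t + d) m := hmono hu_le m
    _ ≤ T w m + γ * d := hdisc w d hd_pos.le m
    _ ≤ w m + γ * d := by gcongr; exact hw m
  have hγd : γ * d < d := mul_lt_of_lt_one_left hd_pos hγ
  linarith

section RobustSup

variable {S : Type*} [Fintype S] {P : Set (S → ℝ)} {v w : S → ℝ} {k : ℝ}

theorem robustSup_mono (hne : P.Nonempty) (hnonneg : ∀ p ∈ P, 0 ≤ p)
    (hbdd : BddAbove ((fun p => ∑ t, p t * w t) '' P)) (hvw : v ≤ w) :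
    robustSup P v ≤ robustSup P w := by
  refine csSup_le (hne.image _) ?_
  rintro _ ⟨p, hp, rfl⟩
  calc ∑ t, p t * v t ≤ ∑ t, p t * w t := dotProduct_le_dotProduct_of_nonneg_left hvw (hnonneg p hp)
    _ ≤ robustSup P w := le_csSup hbdd (Set.mem_image_of_mem _ hp)

theorem robustSup_add_const_le (hne : P.Nonempty) (hsum : ∀ p ∈ P, ∑ t, p t ≤ 1)
    (hbdd : BddAbove ((fun p => ∑ t, p t * v t) '' P)) (hk : 0 ≤ k) :
    robustSup P (fun t => v t + k) ≤ robustSup P v + k := by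
  refine csSup_le (hne.image _) ?_
  rintro _ ⟨p, hp, rfl⟩
  calc ∑ t, p t * (v t + k) = ∑ t, p t * v t + (∑ t, p t) * k := by
        simp only [mul_add, Finset.sum_add_distrib, Finset.sum_mul]
    _ ≤ robustSup P v + k :=
        add_le_add (le_csSup hbdd (Set.mem_image_of_mem _ hp))
          (mul_le_of_le_one_left hk (hsum p hp))

theorem bddAbove_image_sum_mul (hnonneg : ∀ p ∈ P, 0 ≤ p) (hsum : ∀ p ∈ P, ∑ t, p t ≤ 1)
    (v : S → ℝ) : BddAbove ((fun p => ∑ t, p t * v t) '' P) := by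
  refine ⟨‖v‖, ?_⟩
  rintro _ ⟨p, hp, rfl⟩
  calc ∑ t, p t * v t ≤ ∑ t, p t * ‖v‖ :=
        dotProduct_le_dotProduct_of_nonneg_left
          (fun t => (Real.le_norm_self _).trans (norm_le_pi_norm v t)) (hnonneg p hp)
    _ = (∑ t, p t) * ‖v‖ := (Finset.sum_mul _ _ _).symm
    _ ≤ ‖v‖ := mul_le_of_le_one_left (norm_nonneg v) (hsum p hp)

end RobustSup

/-- The robust Bellman operator of a fixed policy. Only the uncertainty sets `Q s` it selects are
recorded: for a policy `σ` these are `Q s = P s (σ s)`. -/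
noncomputable def policyBellman {S : Type*} [Fintype S] (c : S → ℝ) (γ : ℝ)
    (Q : S → Set (S → ℝ)) (v : S → ℝ) : S → ℝ :=
  fun s => c s + γ * robustSup (Q s) v

theorem bellmanT_le_policyBellman {S A : Type*} [Fintype S] [Fintype A] [Nonempty A]
    (c : S → ℝ) {γ : ℝ} (hγ : 0 ≤ γ) (P : S → A → Set (S → ℝ)) (σ : S → A) (v : S → ℝ) :
    bellmanT c γ P v ≤ policyBellman c γ (fun s => P s (σ s)) v := fun s =>
  add_le_add_right (mul_le_mul_of_nonneg_left (Finset.inf'_le _ (Finset.mem_univ (σ s))) hγ) (c s)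

section PolicyBellman

variable {S : Type*} [Fintype S] {γ : ℝ} {Q : S → Set (S → ℝ)}

theorem policyBellman_mono (c : S → ℝ) (hγ : 0 ≤ γ) (hne : ∀ s, (Q s).Nonempty)
    (hnonneg : ∀ s, ∀ p ∈ Q s, 0 ≤ p) (hsum : ∀ s, ∀ p ∈ Q s, ∑ t, p t ≤ 1) :
    Monotone (policyBellman c γ Q) := by
  intro v w hvw s
  have hsup : robustSup (Q s) v ≤ robustSup (Q s) w :=
    robustSup_mono (hne s) (hnonneg s) (bddAbove_image_sum_mul (hnonneg s) (hsum s) w) hvw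
  exact add_le_add_right (mul_le_mul_of_nonneg_left hsup hγ) (c s)

theorem policyBellman_add_const_le (c : S → ℝ) (hγ : 0 ≤ γ) (hne : ∀ s, (Q s).Nonempty)
    (hnonneg : ∀ s, ∀ p ∈ Q s, 0 ≤ p) (hsum : ∀ s, ∀ p ∈ Q s, ∑ t, p t ≤ 1)
    (v : S → ℝ) (k : ℝ) (hk : 0 ≤ k) (s : S) :
    policyBellman c γ Q (fun t => v t + k) s ≤ policyBellman c γ Q v s + γ * k := by
  have hsup : robustSup (Q s) (fun t => v t + k) ≤ robustSup (Q s) v + k :=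
    robustSup_add_const_le (hne s) (hsum s) (bddAbove_image_sum_mul (hnonneg s) (hsum s) v) hk
  calc c s + γ * robustSup (Q s) (fun t => v t + k)
      ≤ c s + γ * (robustSup (Q s) v + k) := by gcongr
    _ = c s + γ * robustSup (Q s) v + γ * k := by ring

theorem fixed_point_le_policy_value_general (c : S → ℝ) (hγ0 : 0 ≤ γ) (hγ1 : γ < 1)
    (hne : ∀ s, (Q s).Nonempty) (hnonneg : ∀ s, ∀ p ∈ Q s, 0 ≤ p)
    (hsum : ∀ s, ∀ p ∈ Q s, ∑ t, p t ≤ 1) {u w : S → ℝ}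
    (hu : u ≤ policyBellman c γ Q u) (hw : policyBellman c γ Q w ≤ w) : u ≤ w :=
  le_of_le_map_of_map_le_of_discounting hγ1 (policyBellman_mono c hγ0 hne hnonneg hsum)
    (policyBellman_add_const_le c hγ0 hne hnonneg hsum) hu hw

end PolicyBellman

/-- If `v*` is the (unique) fixed point of `T`, then for every agent policy `σ`
and every value vector `vσ` for `σ`, one has `v* s ≤ vσ s` for all states `s`. -/
theorem fixed_point_le_policy_value {S A : Type*}
    [Fintype S] [Nonempty S] [Fintype A] [Nonempty A]
    (c : S → ℝ) (γ : ℝ) (hγ0 : 0 ≤ γ) (hγ1 : γ < 1)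
    (P : S → A → Set (S → ℝ))
    (hne : ∀ s a, (P s a).Nonempty)
    (hcpt : ∀ s a, IsCompact (P s a))
    (hsimplex : ∀ s a, ∀ p ∈ P s a, (∀ t, 0 ≤ p t) ∧ ∑ t, p t = 1)
    (vstar : S → ℝ) (hfix : bellmanT c γ P vstar = vstar)
    (σ : S → A) (vσ : S → ℝ)
    (hval : ∀ s, vσ s = c s + γ * robustSup (P s (σ s)) vσ) :
    ∀ s, vstar s ≤ vσ s := by
  have hsub : vstar ≤ policyBellman c γ (fun s => P s (σ s)) vstar :=
    hfix.ge.trans (bellmanT_le_policyBellman c hγ0 P σ vstar)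
  exact fixed_point_le_policy_value_general c hγ0 hγ1 (fun s => hne s (σ s))
    (fun s p hp => (hsimplex s _ p hp).1) (fun s p hp => (hsimplex s _ p hp).2.le)
    hsub (fun s => (hval s).ge)
end

section
/- Let v* be the unique fixed point of T, and let σ and σ' be agent policies with value vectors v^σ and v^{σ'} satisfying v^σ(s) ≥ v^{σ'}(s) for all s ∈ S. Let ŝ ∈ S attain the maximum of s ↦ f(s, σ(s)) over S, and assume σ'(ŝ) = σ(ŝ). Then ‖v^{σ'} − v*‖∞ ≥ (1 − γ) · ‖v^σ − v*‖∞. -/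
/-- The potential of a state-action pair:
`f(s,a) = max_{p ∈ P(s,a)} ∑_t p t * v* t − min_{a'} max_{p ∈ P(s,a')} ∑_t p t * v* t`. -/
noncomputable def potential {S A : Type*} [Fintype S] [Fintype A] [Nonempty A]
    (P : S → A → Set (S → ℝ)) (vstar : S → ℝ) (s : S) (a : A) : ℝ :=
  robustSup (P s a) vstar -
    Finset.univ.inf' Finset.univ_nonempty (fun a' => robustSup (P s a') vstar)

/-!
If `v` is the value vector of a policy `σ` and `v*` is the fixed point of the Bellman operator, then
`v s - v* s = γ (R v - R v*) + γ f(s, σ s)`, where `R` is the robust expectation over `P s (σ s)`.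
As `f ≥ 0` and `R` commutes with adding constants, looking at a minimizer of `v - v*` shows
`v* ≤ v`. Now `R v ≥ R v*` turns the identity into `γ f(s, σ s) ≤ ‖v - v*‖`, whereas
`R v ≤ R v* + ‖v - v*‖` turns it into `(1 - γ) ‖v - v*‖ ≤ γ max f`. The theorem combines the former
for `σ'` with the latter for `σ`.
-/

section RobustSup

variable {S : Type*} [Fintype S] {P : Set (S → ℝ)} {p u v : S → ℝ}

theorem sum_mul_le_robustSup (hP : Bornology.IsBounded P) (hp : p ∈ P) (v : S → ℝ) :
    ∑ t, p t * v t ≤ robustSup P v := by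
  have hcont : Continuous fun q : S → ℝ => ∑ t, q t * v t := by fun_prop
  have hbdd : BddAbove ((fun q => ∑ t, q t * v t) '' P) :=
    (hP.isCompact_closure.image hcont).bddAbove.mono (Set.image_mono subset_closure)
  exact le_csSup hbdd (Set.mem_image_of_mem _ hp)

theorem sum_mul_le_sum_mul_add_of_mem_stdSimplex (hp : p ∈ stdSimplex ℝ S) {k : ℝ}
    (h : ∀ t, u t ≤ v t + k) : ∑ t, p t * u t ≤ ∑ t, p t * v t + k :=
  calc ∑ t, p t * u t ≤ ∑ t, p t * (v t + k) :=
        Finset.sum_le_sum fun t _ => mul_le_mul_of_nonneg_left (h t) (hp.1 t)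
    _ = ∑ t, p t * v t + k := by
        simp only [mul_add, Finset.sum_add_distrib, ← Finset.sum_mul, hp.2, one_mul]

theorem robustSup_le_robustSup_add (hne : P.Nonempty) (hP : P ⊆ stdSimplex ℝ S) {k : ℝ}
    (h : ∀ t, u t ≤ v t + k) : robustSup P u ≤ robustSup P v + k := by
  refine csSup_le (hne.image _) (Set.forall_mem_image.2 fun p hp => ?_)
  have hbdd : Bornology.IsBounded P := (bounded_stdSimplex S).subset hP
  exact (sum_mul_le_sum_mul_add_of_mem_stdSimplex (hP hp) h).trans
    (add_le_add_left (sum_mul_le_robustSup hbdd hp v) k)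

theorem robustSup_mono_s9 (hne : P.Nonempty) (hP : P ⊆ stdSimplex ℝ S) (h : u ≤ v) :
    robustSup P u ≤ robustSup P v := by
  simpa only [add_zero] using
    robustSup_le_robustSup_add hne hP (k := 0) fun t => (h t).trans_eq (add_zero _).symm

end RobustSup

section PolicyValue

variable {S A : Type*} [Fintype S]

/-- `v` is a value vector of the agent policy `σ`: it solves the robust Bellman equation in which
the agent always plays `σ`. -/
def IsPolicyValue (c : S → ℝ) (γ : ℝ) (P : S → A → Set (S → ℝ)) (σ : S → A) (v : S → ℝ) : Prop :=
  ∀ s, v s = c s + γ * robustSup (P s (σ s)) v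

variable [Fintype A] [Nonempty A] {c : S → ℝ} {γ : ℝ} {P : S → A → Set (S → ℝ)} {σ : S → A}
  {v vstar : S → ℝ}

theorem potential_nonneg (P : S → A → Set (S → ℝ)) (vstar : S → ℝ) (s : S) (a : A) :
    0 ≤ potential P vstar s a :=
  sub_nonneg.2 (Finset.inf'_le _ (Finset.mem_univ a))

namespace IsPolicyValue

theorem sub_eq (hv : IsPolicyValue c γ P σ v) (hfix : bellmanT c γ P vstar = vstar) (s : S) :
    v s - vstar s = γ * (robustSup (P s (σ s)) v - robustSup (P s (σ s)) vstar) +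
      γ * potential P vstar s (σ s) := by
  have hstar : c s + γ * Finset.univ.inf' Finset.univ_nonempty (fun a => robustSup (P s a) vstar) =
      vstar s := congrFun hfix s
  rw [hv s, ← hstar, potential]
  ring

theorem fixedPoint_le (hv : IsPolicyValue c γ P σ v) (hfix : bellmanT c γ P vstar = vstar)
    (hγ0 : 0 ≤ γ) (hγ1 : γ < 1) (hne : ∀ s a, (P s a).Nonempty)
    (hP : ∀ s a, P s a ⊆ stdSimplex ℝ S) : vstar ≤ v := by
  intro s
  have : Nonempty S := ⟨s⟩
  obtain ⟨m, hm⟩ := Finite.exists_max fun t => vstar t - v t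
  have hR : robustSup (P m (σ m)) vstar ≤ robustSup (P m (σ m)) v + (vstar m - v m) :=
    robustSup_le_robustSup_add (hne _ _) (hP _ _) fun t => sub_le_iff_le_add'.1 (hm t)
  have hcontract : vstar m - v m ≤ γ * (vstar m - v m) := by
    linarith [hv.sub_eq hfix m, mul_le_mul_of_nonneg_left hR hγ0,
      mul_nonneg hγ0 (potential_nonneg P vstar m (σ m))]
  have hm_nonpos : vstar m - v m ≤ 0 := by nlinarith
  exact sub_nonpos.1 ((hm s).trans hm_nonpos)

theorem mul_potential_le_norm_sub (hv : IsPolicyValue c γ P σ v)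
    (hfix : bellmanT c γ P vstar = vstar) (hγ0 : 0 ≤ γ) (hγ1 : γ < 1)
    (hne : ∀ s a, (P s a).Nonempty) (hP : ∀ s a, P s a ⊆ stdSimplex ℝ S) (s : S) :
    γ * potential P vstar s (σ s) ≤ ‖v - vstar‖ := by
  have hR : robustSup (P s (σ s)) vstar ≤ robustSup (P s (σ s)) v :=
    robustSup_mono_s9 (hne _ _) (hP _ _) (hv.fixedPoint_le hfix hγ0 hγ1 hne hP)
  calc γ * potential P vstar s (σ s) ≤ v s - vstar s := by
        rw [hv.sub_eq hfix s]
        exact le_add_of_nonneg_left (mul_nonneg hγ0 (sub_nonneg.2 hR))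
    _ ≤ ‖v - vstar‖ := (Real.le_norm_self _).trans (norm_le_pi_norm (v - vstar) s)

theorem one_sub_mul_norm_sub_le [Nonempty S] (hv : IsPolicyValue c γ P σ v)
    (hfix : bellmanT c γ P vstar = vstar) (hγ0 : 0 ≤ γ) (hγ1 : γ < 1)
    (hne : ∀ s a, (P s a).Nonempty) (hP : ∀ s a, P s a ⊆ stdSimplex ℝ S) {K : ℝ}
    (hK : ∀ s, γ * potential P vstar s (σ s) ≤ K) : (1 - γ) * ‖v - vstar‖ ≤ K := by
  suffices hnorm : ‖v - vstar‖ ≤ γ * ‖v - vstar‖ + K by linarith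
  refine (pi_norm_le_iff_of_nonempty _).2 fun s => ?_
  have hdist (t : S) : v t ≤ vstar t + ‖v - vstar‖ :=
    sub_le_iff_le_add'.1 ((Real.le_norm_self _).trans (norm_le_pi_norm (v - vstar) t))
  have hR : robustSup (P s (σ s)) v - robustSup (P s (σ s)) vstar ≤ ‖v - vstar‖ :=
    sub_le_iff_le_add'.2 (robustSup_le_robustSup_add (hne _ _) (hP _ _) hdist)
  have hle : vstar s ≤ v s := hv.fixedPoint_le hfix hγ0 hγ1 hne hP s
  rw [Pi.sub_apply, Real.norm_of_nonneg (sub_nonneg.2 hle), hv.sub_eq hfix s]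
  exact add_le_add (mul_le_mul_of_nonneg_left hR hγ0) (hK s)

end IsPolicyValue

theorem potential_combined_bound_general (hγ0 : 0 ≤ γ) (hγ1 : γ < 1)
    (hne : ∀ s a, (P s a).Nonempty) (hP : ∀ s a, P s a ⊆ stdSimplex ℝ S)
    (hfix : bellmanT c γ P vstar = vstar) {σ' : S → A} {v' : S → ℝ}
    (hv : IsPolicyValue c γ P σ v) (hv' : IsPolicyValue c γ P σ' v') {shat : S}
    (hmax : ∀ s, potential P vstar s (σ s) ≤ potential P vstar shat (σ' shat)) :
    (1 - γ) * ‖v - vstar‖ ≤ ‖v' - vstar‖ := by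
  have : Nonempty S := ⟨shat⟩
  exact hv.one_sub_mul_norm_sub_le hfix hγ0 hγ1 hne hP fun s =>
    (mul_le_mul_of_nonneg_left (hmax s) hγ0).trans
      (hv'.mul_potential_le_norm_sub hfix hγ0 hγ1 hne hP shat)

end PolicyValue

/-- If `vσ ≥ vσ'` entrywise, `ŝ` maximizes `s ↦ f(s, σ s)`, and `σ' ŝ = σ ŝ`,
then `‖vσ' - v*‖∞ ≥ (1 - γ) · ‖vσ - v*‖∞`. -/
theorem potential_combined_bound {S A : Type*}
    [Fintype S] [Nonempty S] [Fintype A] [Nonempty A]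
    (c : S → ℝ) (γ : ℝ) (hγ0 : 0 ≤ γ) (hγ1 : γ < 1)
    (P : S → A → Set (S → ℝ))
    (hne : ∀ s a, (P s a).Nonempty)
    (hcpt : ∀ s a, IsCompact (P s a))
    (hsimplex : ∀ s a, ∀ p ∈ P s a, (∀ t, 0 ≤ p t) ∧ ∑ t, p t = 1)
    (vstar : S → ℝ) (hfix : bellmanT c γ P vstar = vstar)
    (σ σ' : S → A) (vσ vσ' : S → ℝ)
    (hval : ∀ s, vσ s = c s + γ * robustSup (P s (σ s)) vσ)
    (hval' : ∀ s, vσ' s = c s + γ * robustSup (P s (σ' s)) vσ')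
    (hge : ∀ s, vσ' s ≤ vσ s)
    (shat : S)
    (hmax : ∀ s, potential P vstar s (σ s) ≤ potential P vstar shat (σ shat))
    (hagree : σ' shat = σ shat) :
    (1 - γ) * ‖vσ - vstar‖ ≤ ‖vσ' - vstar‖ :=
  potential_combined_bound_general hγ0 hγ1 hne hsimplex hfix hval hval' fun s =>
    hagree ▸ hmax s
end

section
/- Let P and Q be row-stochastic matrices, γ ∈ [0,1), and c : S → ℝ. Then (I − γP)⁻¹ c − (I − γQ)⁻¹ c = γ · (I − γP)⁻¹ (P − Q) (I − γQ)⁻¹ c, and consequently ‖(I − γP)⁻¹ c − (I − γQ)⁻¹ c‖∞ ≤ (γ/(1−γ)) · ‖(P − Q)(I − γQ)⁻¹ c‖∞. -/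
open Matrix

/-!
Since `(1 - γ • Q) - (1 - γ • P) = γ • (P - Q)`, the identity is `A⁻¹ - B⁻¹ = A⁻¹ * (B - A) * B⁻¹`.
For the bound, the operator norm induced by the sup norm on vectors is the maximal absolute row sum,
so a row-stochastic matrix has norm one; and `w = (1 - A)⁻¹ *ᵥ v` solves `w = v + A *ᵥ w`, whence
`(1 - ‖A‖) * ‖w‖ ≤ ‖v‖`, which is applied to `A = γ • P`.
-/

theorem inv_one_sub_smul_sub_inv_one_sub_smul {n R : Type*} [Fintype n] [DecidableEq n]
    [CommRing R] {P Q : Matrix n n R} {γ : R} (h : IsUnit (1 - γ • P) ↔ IsUnit (1 - γ • Q)) :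
    (1 - γ • P)⁻¹ - (1 - γ • Q)⁻¹ = γ • ((1 - γ • P)⁻¹ * (P - Q) * (1 - γ • Q)⁻¹) := by
  rw [Matrix.inv_sub_inv h, sub_sub_sub_cancel_left, ← smul_sub, mul_smul_comm, smul_mul_assoc]

section OperatorNorm

open scoped Matrix.Norms.Operator

section Resolvent

variable {n R : Type*} [Fintype n] [DecidableEq n] [NormedCommRing R] [CompleteSpace R]

theorem isUnit_one_sub_of_linfty_opNorm_lt_one {A : Matrix n n R} (hA : ‖A‖ < 1) :
    IsUnit (1 - A) :=
  -- Instance search does not identify the uniformity of the operator norm with the product one.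
  haveI : @CompleteSpace (Matrix n n R) PseudoMetricSpace.toUniformSpace :=
    inferInstanceAs (CompleteSpace (n → n → R))
  isUnit_one_sub_of_norm_lt_one hA

theorem norm_inv_one_sub_mulVec_le {A : Matrix n n R} (hA : ‖A‖ < 1) (v : n → R) :
    ‖(1 - A)⁻¹ *ᵥ v‖ ≤ ‖v‖ / (1 - ‖A‖) := by
  have isUnit_det : IsUnit (1 - A).det :=
    (isUnit_iff_isUnit_det _).1 (isUnit_one_sub_of_linfty_opNorm_lt_one hA)
  set w := (1 - A)⁻¹ *ᵥ v with hw
  have fixed_point : w = v + A *ᵥ w := by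
    rw [← sub_eq_iff_eq_add]
    calc w - A *ᵥ w = (1 - A) *ᵥ w := by rw [sub_mulVec, one_mulVec]
      _ = v := by rw [hw, mulVec_mulVec, mul_nonsing_inv _ isUnit_det, one_mulVec]
  have norm_le : ‖w‖ ≤ ‖v‖ + ‖A‖ * ‖w‖ :=
    calc ‖w‖ = ‖v + A *ᵥ w‖ := congrArg norm fixed_point
      _ ≤ ‖v‖ + ‖A *ᵥ w‖ := norm_add_le _ _
      _ ≤ ‖v‖ + ‖A‖ * ‖w‖ := by gcongr; exact linfty_opNorm_mulVec A w
  rw [le_div_iff₀ (sub_pos.2 hA)]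
  linarith

theorem resolvent_difference_general {P Q : Matrix n n R} {γ : R} (hP : ‖γ • P‖ < 1)
    (hQ : IsUnit (1 - γ • Q)) (c : n → R) :
    (1 - γ • P)⁻¹ *ᵥ c - (1 - γ • Q)⁻¹ *ᵥ c
        = γ • (((1 - γ • P)⁻¹ * (P - Q) * (1 - γ • Q)⁻¹) *ᵥ c) ∧
    ‖(1 - γ • P)⁻¹ *ᵥ c - (1 - γ • Q)⁻¹ *ᵥ c‖
        ≤ ‖γ‖ / (1 - ‖γ • P‖) * ‖(P - Q) *ᵥ ((1 - γ • Q)⁻¹ *ᵥ c)‖ := by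
  have identity : (1 - γ • P)⁻¹ *ᵥ c - (1 - γ • Q)⁻¹ *ᵥ c
      = γ • (((1 - γ • P)⁻¹ * (P - Q) * (1 - γ • Q)⁻¹) *ᵥ c) := by
    rw [← sub_mulVec, inv_one_sub_smul_sub_inv_one_sub_smul
      (iff_of_true (isUnit_one_sub_of_linfty_opNorm_lt_one hP) hQ), smul_mulVec]
  refine ⟨identity, ?_⟩
  set d := (P - Q) *ᵥ ((1 - γ • Q)⁻¹ *ᵥ c) with hd
  calc ‖(1 - γ • P)⁻¹ *ᵥ c - (1 - γ • Q)⁻¹ *ᵥ c‖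
      = ‖γ • ((1 - γ • P)⁻¹ *ᵥ d)‖ := by
        rw [identity, hd, mulVec_mulVec, mulVec_mulVec, mul_assoc]
    _ ≤ ‖γ‖ * ‖(1 - γ • P)⁻¹ *ᵥ d‖ := norm_smul_le _ _
    _ ≤ ‖γ‖ * (‖d‖ / (1 - ‖γ • P‖)) := by gcongr; exact norm_inv_one_sub_mulVec_le hP d
    _ = ‖γ‖ / (1 - ‖γ • P‖) * ‖d‖ := by ring

end Resolvent

section RowStochastic

variable {n : Type*} [Fintype n] [DecidableEq n] [Nonempty n] {P : Matrix n n ℝ}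

theorem linfty_opNorm_of_mem_rowStochastic (hP : P ∈ rowStochastic ℝ n) : ‖P‖ = 1 := by
  have row_sum (i : n) : ∑ j, ‖P i j‖₊ = 1 := by
    ext
    simp only [NNReal.coe_sum, coe_nnnorm, Real.norm_of_nonneg (nonneg_of_mem_rowStochastic hP),
      sum_row_of_mem_rowStochastic hP, NNReal.coe_one]
  simp only [linfty_opNorm_def, row_sum, Finset.sup_const Finset.univ_nonempty, NNReal.coe_one]

theorem linfty_opNorm_smul_of_mem_rowStochastic (hP : P ∈ rowStochastic ℝ n) (γ : ℝ) :
    ‖γ • P‖ = ‖γ‖ := by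
  rw [norm_smul, linfty_opNorm_of_mem_rowStochastic hP, mul_one]

end RowStochastic

end OperatorNorm

/-- Resolvent difference identity and norm bound for two row-stochastic matrices:
`(I-γP)⁻¹ c − (I-γQ)⁻¹ c = γ (I-γP)⁻¹ (P-Q) (I-γQ)⁻¹ c`, and consequently
`‖(I-γP)⁻¹ c − (I-γQ)⁻¹ c‖∞ ≤ (γ/(1-γ)) ‖(P-Q)(I-γQ)⁻¹ c‖∞`. -/
theorem resolvent_difference {S : Type*} [Fintype S] [Nonempty S] [DecidableEq S]
    (P Q : Matrix S S ℝ)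
    (hPnonneg : ∀ s t, 0 ≤ P s t) (hProw : ∀ s, ∑ t, P s t = 1)
    (hQnonneg : ∀ s t, 0 ≤ Q s t) (hQrow : ∀ s, ∑ t, Q s t = 1)
    (γ : ℝ) (hγ0 : 0 ≤ γ) (hγ1 : γ < 1)
    (c : S → ℝ) :
    (1 - γ • P)⁻¹ *ᵥ c - (1 - γ • Q)⁻¹ *ᵥ c
        = γ • (((1 - γ • P)⁻¹ * (P - Q) * (1 - γ • Q)⁻¹) *ᵥ c) ∧
    ‖(1 - γ • P)⁻¹ *ᵥ c - (1 - γ • Q)⁻¹ *ᵥ c‖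
        ≤ γ / (1 - γ) * ‖(P - Q) *ᵥ ((1 - γ • Q)⁻¹ *ᵥ c)‖ := by
  have norm_γ : ‖γ‖ = γ := Real.norm_of_nonneg hγ0
  have norm_γP := linfty_opNorm_smul_of_mem_rowStochastic
    (mem_rowStochastic_iff_sum.2 ⟨hPnonneg, hProw⟩) γ
  have norm_γQ := linfty_opNorm_smul_of_mem_rowStochastic
    (mem_rowStochastic_iff_sum.2 ⟨hQnonneg, hQrow⟩) γ
  rw [norm_γ] at norm_γP norm_γQ
  simpa only [norm_γ, norm_γP] using resolvent_difference_general (norm_γP.trans_lt hγ1)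
    (isUnit_one_sub_of_linfty_opNorm_lt_one (norm_γQ.trans_lt hγ1)) c
end

section
/- Let S be a finite set with |S| = n ≥ 2, let P, Q, Q' be row-stochastic matrices, γ ∈ [0,1), c : S → ℝ, and set v* = (I − γP)⁻¹ c, v = (I − γQ)⁻¹ c, v' = (I − γQ')⁻¹ c. For each s ∈ S, let e_s : Fin n → S be a bijection such that i ↦ v*(e_s(i)) is nonincreasing, and for R ∈ {P, Q, Q'} define F_R(s,i) = ∑_{j ≤ i} R(s, e_s(j)). Assume: F_P(s,i) ≥ F_Q(s,i) and F_P(s,i) ≥ F_{Q'}(s,i) for all s and i; v'(s) ≤ v*(s) for all s ∈ S; (ŝ, î) with î + 1 < n maximizes f(s,i) = (F_P(s,i) − F_Q(s,i))·(v*(e_s(i)) − v*(e_s(i+1))) over all s ∈ S and i with i + 1 < n; and F_P(ŝ,î) − F_{Q'}(ŝ,î) ≥ (1/2)·(F_P(ŝ,î) − F_Q(ŝ,î)). Then ‖v* − v'‖∞ ≥ ((1−γ)/(2n)) · ‖v* − v‖∞. -/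
open Matrix

/-!
The value gap satisfies `v* - v = γ (P - Q) v* + γ Q (v* - v)`. Summation by parts along the ranking
of the successors of `s` by `v*` turns `((P - Q) v*) s` into `∑ i, f s i`, whose terms are
nonnegative and at most `M = f ŝ î`. Since `Q` does not increase the sup norm, this gives
`(1 - γ) ‖v* - v‖ ≤ γ (n - 1) M`. In the same identity for `Q'` at `ŝ`, the term
`γ (Q' (v* - v')) ŝ` is nonnegative and the `î`-th summand of the other one is at least `M / 2`, so
`‖v* - v'‖ ≥ γ M / 2`.
-/

section RankedSums

theorem sum_mul_eq_sum_Iic_mul_sub_add {R : Type*} [Ring R] {m : ℕ} (a w : Fin (m + 1) → R) :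
    ∑ i, a i * w i =
      ∑ i : Fin m, (∑ j ∈ Finset.Iic i.castSucc, a j) * (w i.castSucc - w i.succ) +
        (∑ j, a j) * w (Fin.last m) := by
  induction m with
  | zero => simp
  | succ k ih =>
    rw [Fin.sum_univ_castSucc, ih (fun i ↦ a i.castSucc) (fun i ↦ w i.castSucc),
      Fin.sum_univ_castSucc (n := k) (f := fun i ↦ _ * (w i.castSucc - w i.succ)),
      Fin.sum_univ_castSucc (f := a)]
    simp only [Fin.sum_Iic_castSucc, ← Fin.top_eq_last, Finset.Iic_top, Fin.succ_castSucc]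
    simp only [Fin.top_eq_last, Fin.succ_last]
    noncomm_ring

variable {R S : Type*} {m : ℕ}

/-- The partial sums of the weights `p` along the ranking `e` of `S`: the paper's `F_R(s, i)` is
`rankedCDF (R s) (e s) i`. -/
def rankedCDF [AddCommMonoid R] {n : ℕ} (p : S → R) (e : Fin n ≃ S) (i : Fin n) : R :=
  ∑ j ∈ Finset.Iic i, p (e j)

/-- The `i`-th summand of `p ⬝ᵥ w - q ⬝ᵥ w` after summation by parts along the ranking `e`: the
paper's `f(s, i)` is `rankedLoss (P s) (Q s) v* (e s) i`. Indexing by `Fin m` ensures that both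
`i` and `i + 1` are ranks in `Fin (m + 1)`. -/
def rankedLoss [Ring R] (p q w : S → R) (e : Fin (m + 1) ≃ S) (i : Fin m) : R :=
  (rankedCDF p e i.castSucc - rankedCDF q e i.castSucc) * (w (e i.castSucc) - w (e i.succ))

theorem sub_dotProduct_eq_sum_rankedLoss [Ring R] [Fintype S] {p q : S → R}
    (hpq : ∑ t, p t = ∑ t, q t) (w : S → R) (e : Fin (m + 1) ≃ S) :
    (p - q) ⬝ᵥ w = ∑ i, rankedLoss p q w e i := by
  have hsum : ∑ j, (p - q) (e j) = 0 := by
    rw [e.sum_comp]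
    simp only [Pi.sub_apply, Finset.sum_sub_distrib, hpq, sub_self]
  calc (p - q) ⬝ᵥ w = ∑ j, (p - q) (e j) * w (e j) := (e.sum_comp fun t ↦ (p - q) t * w t).symm
    _ = ∑ i : Fin m, (∑ j ∈ Finset.Iic i.castSucc, (p - q) (e j)) *
          (w (e i.castSucc) - w (e i.succ)) := by
        rw [sum_mul_eq_sum_Iic_mul_sub_add (fun j ↦ (p - q) (e j)) (fun j ↦ w (e j)), hsum,
          zero_mul, add_zero]
    _ = ∑ i, rankedLoss p q w e i := by
        simp only [rankedLoss, rankedCDF, Pi.sub_apply, Finset.sum_sub_distrib]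

theorem norm_sub_mulVec_le_mul_of_norm_rankedLoss_le {T : Type*} [Fintype S] [Fintype T]
    [NormedRing R] {P Q : Matrix T S R} {w : S → R} {e : T → Fin (m + 1) ≃ S} {M : ℝ} (hM : 0 ≤ M)
    (hPQ : ∀ s, ∑ t, P s t = ∑ t, Q s t)
    (hle : ∀ s i, ‖rankedLoss (P s) (Q s) w (e s) i‖ ≤ M) :
    ‖(P - Q) *ᵥ w‖ ≤ m * M := by
  refine (pi_norm_le_iff_of_nonneg (by positivity)).2 fun s ↦ ?_
  calc ‖((P - Q) *ᵥ w) s‖ = ‖∑ i, rankedLoss (P s) (Q s) w (e s) i‖ :=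
        congrArg _ (sub_dotProduct_eq_sum_rankedLoss (hPQ s) w (e s))
    _ ≤ ∑ _i : Fin m, M := norm_sum_le_of_le _ fun i _ ↦ hle s i
    _ = m * M := by simp

variable [Ring R] [PartialOrder R] [IsOrderedRing R] {p q w : S → R} {e : Fin (m + 1) ≃ S}

theorem rankedLoss_nonneg (hw : Antitone (w ∘ e)) {i : Fin m}
    (hqp : rankedCDF q e i.castSucc ≤ rankedCDF p e i.castSucc) : 0 ≤ rankedLoss p q w e i :=
  mul_nonneg (sub_nonneg.2 hqp) (sub_nonneg.2 (hw i.castSucc_lt_succ.le))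

theorem mul_rankedLoss_le_rankedLoss {q' : S → R} {θ : R} (hw : Antitone (w ∘ e)) {i : Fin m}
    (h : θ * (rankedCDF p e i.castSucc - rankedCDF q e i.castSucc) ≤
      rankedCDF p e i.castSucc - rankedCDF q' e i.castSucc) :
    θ * rankedLoss p q w e i ≤ rankedLoss p q' w e i := by
  rw [rankedLoss, ← mul_assoc]
  exact mul_le_mul_of_nonneg_right h (sub_nonneg.2 (hw i.castSucc_lt_succ.le))

end RankedSums

section DiscountedValue

/-- `v` is a value function for transitions `P`, discount factor `γ` and costs `c`: it solves the
Bellman equation. Unlike `v = (1 - γ • P)⁻¹ *ᵥ c`, this is meaningful also when `1 - γ • P` is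
singular. -/
def IsDiscountedValue {R S : Type*} [Fintype S] [Semiring R] (P : Matrix S S R) (γ : R)
    (c v : S → R) : Prop :=
  v = c + γ • (P *ᵥ v)

namespace IsDiscountedValue

variable {R S : Type*} [Fintype S]

theorem of_eq_inv_mulVec [CommRing R] [DecidableEq S] {P : Matrix S S R} {γ : R} {c v : S → R}
    (hP : IsUnit (1 - γ • P)) (hv : v = (1 - γ • P)⁻¹ *ᵥ c) : IsDiscountedValue P γ c v := by
  have hinv : (1 - γ • P) *ᵥ v = c := by
    rw [hv, mulVec_mulVec, mul_nonsing_inv _ ((isUnit_iff_isUnit_det _).1 hP), one_mulVec]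
  rwa [sub_mulVec, one_mulVec, smul_mulVec, sub_eq_iff_eq_add] at hinv

theorem sub_eq_smul_add_smul [Ring R] {P Q : Matrix S S R} {γ : R} {c x y : S → R}
    (hx : IsDiscountedValue P γ c x) (hy : IsDiscountedValue Q γ c y) :
    x - y = γ • ((P - Q) *ᵥ x) + γ • (Q *ᵥ (x - y)) := by
  calc x - y = (c + γ • (P *ᵥ x)) - (c + γ • (Q *ᵥ y)) := congrArg₂ _ hx hy
    _ = γ • ((P - Q) *ᵥ x) + γ • (Q *ᵥ (x - y)) := by
      rw [sub_mulVec, mulVec_sub, smul_sub, smul_sub]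
      abel

open scoped Matrix.Norms.Operator

theorem one_sub_mul_norm_sub_le {𝕜 : Type*} [NormedField 𝕜] {P Q : Matrix S S 𝕜} {γ : 𝕜}
    {c x y : S → 𝕜} (hx : IsDiscountedValue P γ c x) (hy : IsDiscountedValue Q γ c y)
    (hQ : ‖Q‖ ≤ 1) : (1 - ‖γ‖) * ‖x - y‖ ≤ ‖γ‖ * ‖(P - Q) *ᵥ x‖ := by
  have hcontr : ‖Q *ᵥ (x - y)‖ ≤ ‖x - y‖ :=
    (linfty_opNorm_mulVec Q (x - y)).trans (mul_le_of_le_one_left (norm_nonneg _) hQ)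
  have htri : ‖x - y‖ ≤ ‖γ‖ * ‖(P - Q) *ᵥ x‖ + ‖γ‖ * ‖x - y‖ :=
    calc ‖x - y‖ = ‖γ • ((P - Q) *ᵥ x) + γ • (Q *ᵥ (x - y))‖ :=
        congrArg _ (hx.sub_eq_smul_add_smul hy)
      _ ≤ ‖γ‖ * ‖(P - Q) *ᵥ x‖ + ‖γ‖ * ‖Q *ᵥ (x - y)‖ := by
        simpa only [norm_smul] using norm_add_le (γ • ((P - Q) *ᵥ x)) (γ • (Q *ᵥ (x - y)))
      _ ≤ ‖γ‖ * ‖(P - Q) *ᵥ x‖ + ‖γ‖ * ‖x - y‖ := by gcongr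
  linarith

theorem mul_sub_mulVec_apply_le [Ring R] [PartialOrder R] [IsOrderedRing R] {P Q : Matrix S S R}
    {γ : R} {c x y : S → R} (hx : IsDiscountedValue P γ c x) (hy : IsDiscountedValue Q γ c y)
    (hγ : 0 ≤ γ) (hyx : y ≤ x) {s : S} (hQ : 0 ≤ Q s) :
    γ * ((P - Q) *ᵥ x) s ≤ x s - y s := by
  have hrest : 0 ≤ (Q *ᵥ (x - y)) s := dotProduct_nonneg_of_nonneg hQ (sub_nonneg.2 hyx)
  calc γ * ((P - Q) *ᵥ x) s ≤ γ * ((P - Q) *ᵥ x) s + γ * (Q *ᵥ (x - y)) s :=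
        le_add_of_nonneg_right (mul_nonneg hγ hrest)
    _ = x s - y s := (congrFun (hx.sub_eq_smul_add_smul hy) s).symm

end IsDiscountedValue

end DiscountedValue

section Stochastic

open scoped Matrix.Norms.Operator

variable {S : Type*} [Fintype S]

theorem linfty_opNorm_le_one_of_mem_stdSimplex {T : Type*} [Fintype T] {P : Matrix T S ℝ}
    (hP : ∀ s, P s ∈ stdSimplex ℝ S) : ‖P‖ ≤ 1 := by
  rw [linfty_opNorm_def, NNReal.coe_le_one, Finset.sup_le_iff]
  intro s _
  rw [← NNReal.coe_le_one, NNReal.coe_sum]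
  simp only [coe_nnnorm, Real.norm_of_nonneg ((hP s).1 _), (hP s).2, le_refl]

theorem isDiscountedValue_inv_mulVec_of_mem_stdSimplex [DecidableEq S] {P : Matrix S S ℝ} {γ : ℝ}
    {c v : S → ℝ} (hP : ∀ s, P s ∈ stdSimplex ℝ S) (hγ : |γ| < 1)
    (hv : v = (1 - γ • P)⁻¹ *ᵥ c) : IsDiscountedValue P γ c v := by
  have hnorm : ‖γ • P‖ < 1 := by
    rw [norm_smul, Real.norm_eq_abs]
    exact mul_lt_one_of_nonneg_of_lt_one_left (abs_nonneg γ) hγ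
      (linfty_opNorm_le_one_of_mem_stdSimplex hP)
  exact .of_eq_inv_mulVec (isUnit_one_sub_of_norm_lt_one hnorm) hv

theorem halving_value_contraction_general {m : ℕ} {P Q Q' : Matrix S S ℝ} {γ θ : ℝ}
    {c vstar v v' : S → ℝ} {e : S → Fin (m + 1) ≃ S} {shat : S} {ihat : Fin m}
    (hγ : 0 ≤ γ) (hθ : 0 ≤ θ)
    (hPQ : ∀ s, ∑ t, P s t = ∑ t, Q s t) (hQ : ‖Q‖ ≤ 1)
    (hPQ' : ∑ t, P shat t = ∑ t, Q' shat t) (hQ' : 0 ≤ Q' shat)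
    (hvstar : IsDiscountedValue P γ c vstar) (hv : IsDiscountedValue Q γ c v)
    (hv' : IsDiscountedValue Q' γ c v')
    (hmono : ∀ s, Antitone (vstar ∘ e s))
    (hFQ : ∀ s (i : Fin m),
      rankedCDF (Q s) (e s) i.castSucc ≤ rankedCDF (P s) (e s) i.castSucc)
    (hFQ' : ∀ i : Fin m,
      rankedCDF (Q' shat) (e shat) i.castSucc ≤ rankedCDF (P shat) (e shat) i.castSucc)
    (hle : v' ≤ vstar)
    (hmax : ∀ s i, rankedLoss (P s) (Q s) vstar (e s) i ≤
      rankedLoss (P shat) (Q shat) vstar (e shat) ihat)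
    (hfrac : θ * (rankedCDF (P shat) (e shat) ihat.castSucc -
        rankedCDF (Q shat) (e shat) ihat.castSucc) ≤
      rankedCDF (P shat) (e shat) ihat.castSucc - rankedCDF (Q' shat) (e shat) ihat.castSucc) :
    θ * (1 - γ) / m * ‖vstar - v‖ ≤ ‖vstar - v'‖ := by
  set M := rankedLoss (P shat) (Q shat) vstar (e shat) ihat
  have hnonneg s i : 0 ≤ rankedLoss (P s) (Q s) vstar (e s) i :=
    rankedLoss_nonneg (hmono s) (hFQ s i)
  have hupper : (1 - γ) * ‖vstar - v‖ ≤ γ * (m * M) := by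
    have hbound := hvstar.one_sub_mul_norm_sub_le hv hQ
    rw [Real.norm_of_nonneg hγ] at hbound
    refine hbound.trans (mul_le_mul_of_nonneg_left ?_ hγ)
    exact norm_sub_mulVec_le_mul_of_norm_rankedLoss_le (hnonneg shat ihat) hPQ fun s i ↦
      (Real.norm_of_nonneg (hnonneg s i)).trans_le (hmax s i)
  have hloss : θ * M ≤ ((P - Q') *ᵥ vstar) shat :=
    calc θ * M ≤ rankedLoss (P shat) (Q' shat) vstar (e shat) ihat :=
          mul_rankedLoss_le_rankedLoss (hmono shat) hfrac
      _ ≤ ∑ i, rankedLoss (P shat) (Q' shat) vstar (e shat) i :=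
          Finset.single_le_sum (fun i _ ↦ rankedLoss_nonneg (hmono shat) (hFQ' i))
            (Finset.mem_univ ihat)
      _ = ((P - Q') *ᵥ vstar) shat :=
          (sub_dotProduct_eq_sum_rankedLoss hPQ' vstar (e shat)).symm
  have hlower : γ * (θ * M) ≤ ‖vstar - v'‖ :=
    calc γ * (θ * M) ≤ γ * ((P - Q') *ᵥ vstar) shat := mul_le_mul_of_nonneg_left hloss hγ
      _ ≤ (vstar - v') shat := hvstar.mul_sub_mulVec_apply_le hv' hγ hle hQ'
      _ ≤ ‖vstar - v'‖ := (le_abs_self _).trans (norm_le_pi_norm (vstar - v') shat)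
  have hm : (0 : ℝ) < m := Nat.cast_pos.2 ihat.pos
  calc θ * (1 - γ) / m * ‖vstar - v‖ = θ / m * ((1 - γ) * ‖vstar - v‖) := by ring
    _ ≤ θ / m * (γ * (m * M)) := mul_le_mul_of_nonneg_left hupper (by positivity)
    _ = γ * (θ * M) := by field_simp
    _ ≤ ‖vstar - v'‖ := hlower

end Stochastic

/-- Halving lemma: with `v* = (I-γP)⁻¹ c`, `v = (I-γQ)⁻¹ c`, `v' = (I-γQ')⁻¹ c`,
successors ordered by descending `v*` via bijections `e s`, cumulative dominance
`F_P ≥ F_Q` and `F_P ≥ F_{Q'}`, `v' ≤ v*` entrywise, `(ŝ, î)` maximizing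
`f(s,i) = (F_P(s,i) − F_Q(s,i))(v*(e_s i) − v*(e_s (i+1)))`, and
`F_P(ŝ,î) − F_{Q'}(ŝ,î) ≥ ½ (F_P(ŝ,î) − F_Q(ŝ,î))`, one has
`‖v* − v'‖∞ ≥ ((1−γ)/(2n)) ‖v* − v‖∞`. -/
theorem halving_value_contraction {S : Type*} [Fintype S] [DecidableEq S]
    (n : ℕ) (hn : 2 ≤ n) (hcard : Fintype.card S = n)
    (P Q Q' : Matrix S S ℝ)
    (hPnonneg : ∀ s t, 0 ≤ P s t) (hProw : ∀ s, ∑ t, P s t = 1)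
    (hQnonneg : ∀ s t, 0 ≤ Q s t) (hQrow : ∀ s, ∑ t, Q s t = 1)
    (hQ'nonneg : ∀ s t, 0 ≤ Q' s t) (hQ'row : ∀ s, ∑ t, Q' s t = 1)
    (γ : ℝ) (hγ0 : 0 ≤ γ) (hγ1 : γ < 1)
    (c : S → ℝ)
    (vstar v v' : S → ℝ)
    (hvstar : vstar = (1 - γ • P)⁻¹ *ᵥ c)
    (hv : v = (1 - γ • Q)⁻¹ *ᵥ c)
    (hv' : v' = (1 - γ • Q')⁻¹ *ᵥ c)
    (e : S → (Fin n ≃ S))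
    (hmono : ∀ s : S, ∀ i j : Fin n, i ≤ j → vstar (e s j) ≤ vstar (e s i))
    (hFQ : ∀ s : S, ∀ i : Fin n,
      ∑ j ∈ Finset.Iic i, Q s (e s j) ≤ ∑ j ∈ Finset.Iic i, P s (e s j))
    (hFQ' : ∀ s : S, ∀ i : Fin n,
      ∑ j ∈ Finset.Iic i, Q' s (e s j) ≤ ∑ j ∈ Finset.Iic i, P s (e s j))
    (hle : ∀ s, v' s ≤ vstar s)
    (shat : S) (ihat : Fin n) (hihat : (ihat : ℕ) + 1 < n)
    (hmax : ∀ s : S, ∀ i : Fin n, ∀ h : (i : ℕ) + 1 < n,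
      ((∑ j ∈ Finset.Iic i, P s (e s j)) - ∑ j ∈ Finset.Iic i, Q s (e s j))
          * (vstar (e s i) - vstar (e s ⟨(i : ℕ) + 1, h⟩))
        ≤ ((∑ j ∈ Finset.Iic ihat, P shat (e shat j))
              - ∑ j ∈ Finset.Iic ihat, Q shat (e shat j))
          * (vstar (e shat ihat) - vstar (e shat ⟨(ihat : ℕ) + 1, hihat⟩)))
    (hhalf : (1 / 2) * ((∑ j ∈ Finset.Iic ihat, P shat (e shat j))
              - ∑ j ∈ Finset.Iic ihat, Q shat (e shat j))
        ≤ (∑ j ∈ Finset.Iic ihat, P shat (e shat j))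
              - ∑ j ∈ Finset.Iic ihat, Q' shat (e shat j)) :
    (1 - γ) / (2 * n) * ‖vstar - v‖ ≤ ‖vstar - v'‖ := by
  obtain _ | m := n
  · exact ihat.elim0
  have hγ : |γ| < 1 := abs_lt.2 ⟨by linarith, hγ1⟩
  have hP s : P s ∈ stdSimplex ℝ S := ⟨hPnonneg s, hProw s⟩
  have hQ s : Q s ∈ stdSimplex ℝ S := ⟨hQnonneg s, hQrow s⟩
  have hQ' s : Q' s ∈ stdSimplex ℝ S := ⟨hQ'nonneg s, hQ'row s⟩
  have hm : (0 : ℝ) < m := Nat.cast_pos.2 (by omega)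
  calc (1 - γ) / (2 * ↑(m + 1)) * ‖vstar - v‖ ≤ 1 / 2 * (1 - γ) / m * ‖vstar - v‖ := by
        rw [one_div_mul_eq_div, div_div]
        have := sub_nonneg.2 hγ1.le
        gcongr
        exact m.le_succ
    _ ≤ ‖vstar - v'‖ :=
        halving_value_contraction_general (ihat := ⟨ihat, Nat.lt_of_succ_lt_succ hihat⟩) hγ0
          one_half_pos.le (fun s ↦ (hProw s).trans (hQrow s).symm)
          (linfty_opNorm_le_one_of_mem_stdSimplex hQ) ((hProw shat).trans (hQ'row shat).symm)
          (hQ'nonneg shat) (isDiscountedValue_inv_mulVec_of_mem_stdSimplex hP hγ hvstar)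
          (isDiscountedValue_inv_mulVec_of_mem_stdSimplex hQ hγ hv)
          (isDiscountedValue_inv_mulVec_of_mem_stdSimplex hQ' hγ hv') (fun s _ _ ↦ hmono s _ _)
          (fun s i ↦ hFQ s i.castSucc) (fun i ↦ hFQ' shat i.castSucc) hle
          (fun s i ↦ hmax s i.castSucc (Nat.succ_lt_succ i.isLt)) hhalf
end

section
/- Let c' and D be positive integers with 2^{D−1} > 2c'. Let N ≥ 1 and let y_1, …, y_N be nonzero real numbers satisfying ⌊log₂ |y_{i+1}|⌋ ≥ ⌊log₂ |y_i|⌋ + D for all 1 ≤ i < N. Then for every vector x ∈ ℤ^N with x ≠ 0 and |x_i| ≤ c' for all i, we have ∑_{i=1}^N x_i y_i ≠ 0. -/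
/-!
Since the floors of their logarithms are separated, each `y (i + 1)` exceeds `y i` in norm by a
factor of at least `c + 1`. Telescoping `c * ‖y i‖ ≤ ‖y (i + 1)‖ - ‖y i‖` shows that `‖y k‖` exceeds
`c` times the sum of all earlier norms. In a nontrivial combination with coefficients of size at
most `c`, the last nonzero term has a coefficient of size at least `1` and so outweighs all others.
-/

open Finset

theorem zpow_mul_lt_of_floor_logb_add_lt {b u v : ℝ} {d : ℤ} (hb : 1 < b) (hu : 0 < u) (hv : 0 < v)
    (h : ⌊Real.logb b u⌋ + d < ⌊Real.logb b v⌋) : b ^ d * u < v := by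
  have hb₀ : 0 < b := zero_lt_one.trans hb
  have hfloor : d + (⌊Real.logb b u⌋ + 1 : ℝ) ≤ ⌊Real.logb b v⌋ := by
    exact_mod_cast (by lia : d + (⌊Real.logb b u⌋ + 1) ≤ ⌊Real.logb b v⌋)
  rw [← Real.logb_lt_logb_iff hb (by positivity) hv]
  calc Real.logb b (b ^ d * u)
    _ = d + Real.logb b u := by
      rw [Real.logb_mul (by positivity) hu.ne', ← Real.rpow_intCast, Real.logb_rpow hb₀ hb.ne']
    _ < d + (⌊Real.logb b u⌋ + 1) := by gcongr; exact Int.lt_floor_add_one _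
    _ ≤ ⌊Real.logb b v⌋ := hfloor
    _ ≤ Real.logb b v := Int.floor_le _

section LinearOrder

variable {ι : Type*} [LinearOrder ι] [LocallyFiniteOrderBot ι]

theorem exists_covBy_of_Iio_nonempty {k : ι} (hk : (Iio k).Nonempty) : ∃ j, j ⋖ k :=
  ⟨(Iio k).max' hk, mem_Iio.1 (max'_mem _ hk), fun _ hjm hmk ↦
    hjm.not_ge (le_max' _ _ (mem_Iio.2 hmk))⟩

theorem insert_Iio_eq_Iio_of_covBy {j k : ι} (h : j ⋖ k) : insert j (Iio j) = Iio k := by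
  rw [Iio_insert, ← coe_inj, coe_Iic, coe_Iio, h.Iio_eq]

theorem mul_sum_Iio_lt_of_covBy {R : Type*} [Semiring R] [PartialOrder R]
    [IsOrderedCancelAddMonoid R] {a : ι → R} {c : R} (ha : ∀ i, 0 < a i)
    (hgrow : ∀ i j, i ⋖ j → (c + 1) * a i ≤ a j) (k : ι) :
    c * ∑ i ∈ Iio k, a i < a k := by
  induction hs : Iio k using Finset.strongInduction generalizing k with
  | H s ih =>
    subst hs
    obtain hempty | hne := (Iio k).eq_empty_or_nonempty
    · simpa [hempty] using ha k
    · obtain ⟨j, hjk⟩ := exists_covBy_of_Iio_nonempty hne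
      have hj : c * ∑ i ∈ Iio j, a i < a j := by
        refine ih _ ?_ j rfl
        rw [← insert_Iio_eq_Iio_of_covBy hjk]
        exact ssubset_insert (by simp)
      calc c * ∑ i ∈ Iio k, a i
        _ = c * a j + c * ∑ i ∈ Iio j, a i := by
          rw [← insert_Iio_eq_Iio_of_covBy hjk, sum_insert (by simp), mul_add]
        _ < c * a j + a j := by gcongr
        _ = (c + 1) * a j := by rw [add_mul, one_mul]
        _ ≤ a k := hgrow j k hjk

theorem sum_eq_sum_Iio_add_of_forall_gt_eq_zero [Fintype ι] {M : Type*} [AddCommMonoid M]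
    {f : ι → M} {k : ι} (hf : ∀ i, k < i → f i = 0) :
    ∑ i, f i = ∑ i ∈ Iio k, f i + f k := by
  rw [← sum_subset (subset_univ (Iic k)) fun i _ hi ↦ hf i (by simpa using hi), ← Iio_insert,
    sum_insert (by simp), add_comm]

end LinearOrder

section Norm

variable {ι 𝕜 E : Type*} [NormedField 𝕜] [SeminormedAddCommGroup E] [NormedSpace 𝕜 E]
  {x : ι → 𝕜} {y : ι → E} {c : ℝ}

theorem norm_sum_smul_le_mul_sum_norm (s : Finset ι) (hx : ∀ i ∈ s, ‖x i‖ ≤ c) :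
    ‖∑ i ∈ s, x i • y i‖ ≤ c * ∑ i ∈ s, ‖y i‖ := by
  rw [mul_sum]
  refine norm_sum_le_of_le s fun i hi ↦ ?_
  rw [norm_smul]
  gcongr
  exact hx i hi

theorem sum_smul_ne_zero_of_mul_sum_Iio_lt [Fintype ι] [LinearOrder ι] [LocallyFiniteOrderBot ι]
    (hy : ∀ k, c * ∑ i ∈ Iio k, ‖y i‖ < ‖y k‖) (hx : x ≠ 0)
    (hx_ge : ∀ i, x i ≠ 0 → 1 ≤ ‖x i‖) (hx_le : ∀ i, ‖x i‖ ≤ c) :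
    ∑ i, x i • y i ≠ 0 := by
  obtain ⟨k, hk, hlast⟩ : ∃ k, x k ≠ 0 ∧ ∀ i, k < i → x i = 0 := by
    obtain ⟨k, hk⟩ := (Set.toFinite (Function.support x)).exists_maximal
      (Function.support_nonempty_iff.2 hx)
    exact ⟨k, hk.prop, fun i hki ↦ by_contra fun hi ↦ hk.not_gt hi hki⟩
  rw [sum_eq_sum_Iio_add_of_forall_gt_eq_zero (k := k) fun i hi ↦ by rw [hlast i hi, zero_smul]]
  intro hsum
  refine lt_irrefl ‖y k‖ ?_
  calc ‖y k‖
    _ ≤ ‖x k‖ * ‖y k‖ := le_mul_of_one_le_left (norm_nonneg _) (hx_ge k hk)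
    _ = ‖∑ i ∈ Iio k, x i • y i‖ := by rw [eq_neg_of_add_eq_zero_left hsum, norm_neg, norm_smul]
    _ ≤ c * ∑ i ∈ Iio k, ‖y i‖ := norm_sum_smul_le_mul_sum_norm _ fun i _ ↦ hx_le i
    _ < ‖y k‖ := hy k

end Norm

theorem msb_separation_linear_independence_general {𝕜 E : Type*} [NormedField 𝕜]
    [NormedAddCommGroup E] [NormedSpace 𝕜 E] {b c : ℝ} {d : ℤ} (hb : 1 < b)
    (hc : c + 1 ≤ b ^ (d - 1)) {N : ℕ} {y : Fin N → E} (hy : ∀ i, y i ≠ 0)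
    (hsep : ∀ i : ℕ, ∀ h : i + 1 < N,
      ⌊Real.logb b ‖y ⟨i, by lia⟩‖⌋ + d ≤ ⌊Real.logb b ‖y ⟨i + 1, h⟩‖⌋)
    {x : Fin N → 𝕜} (hx : x ≠ 0) (hx_ge : ∀ i, x i ≠ 0 → 1 ≤ ‖x i‖) (hx_le : ∀ i, ‖x i‖ ≤ c) :
    ∑ i, x i • y i ≠ 0 := by
  have hpos : ∀ i, 0 < ‖y i‖ := fun i ↦ norm_pos_iff.2 (hy i)
  refine sum_smul_ne_zero_of_mul_sum_Iio_lt (mul_sum_Iio_lt_of_covBy hpos ?_) hx hx_ge hx_le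
  rintro ⟨i, hi⟩ ⟨j, hj⟩ hij
  obtain rfl : i + 1 = j := by simpa using hij
  have hlt : ⌊Real.logb b ‖y ⟨i, hi⟩‖⌋ + (d - 1) < ⌊Real.logb b ‖y ⟨i + 1, hj⟩‖⌋ := by
    linarith [hsep i hj]
  calc (c + 1) * ‖y ⟨i, hi⟩‖
    _ ≤ b ^ (d - 1) * ‖y ⟨i, hi⟩‖ := by gcongr
    _ ≤ ‖y ⟨i + 1, hj⟩‖ := (zpow_mul_lt_of_floor_logb_add_lt hb (hpos _) (hpos _) hlt).le

/-- MSB separation implies bounded-coefficient linear independence: if the nonzero reals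
`y₁, …, y_N` satisfy `⌊log₂ |y_{i+1}|⌋ ≥ ⌊log₂ |y_i|⌋ + D` with `2^{D-1} > 2c'`, then no
nontrivial integer combination with coefficients bounded by `c'` vanishes. -/
theorem msb_separation_linear_independence
    (c' D : ℕ) (hc' : 0 < c') (hD : 0 < D) (hDc : 2 * c' < 2 ^ (D - 1))
    (N : ℕ) (hN : 1 ≤ N) (y : Fin N → ℝ) (hy : ∀ i, y i ≠ 0)
    (hsep : ∀ i : ℕ, ∀ h : i + 1 < N,
      ⌊Real.logb 2 |y ⟨i, by omega⟩|⌋ + (D : ℤ) ≤ ⌊Real.logb 2 |y ⟨i + 1, h⟩|⌋) :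
    ∀ x : Fin N → ℤ, x ≠ 0 → (∀ i, |x i| ≤ (c' : ℤ)) →
      ∑ i, (x i : ℝ) * y i ≠ 0 := by
  intro x hx hx_le
  have hc : (c' : ℝ) + 1 ≤ 2 ^ ((D : ℤ) - 1) := by
    rw [← Nat.cast_pred hD]
    exact_mod_cast (by lia : c' + 1 ≤ 2 ^ (D - 1))
  exact msb_separation_linear_independence_general (x := fun i ↦ (x i : ℝ)) one_lt_two hc hy hsep
    (fun h ↦ hx (funext fun i ↦ Int.cast_eq_zero.1 (congrFun h i)))
    (fun i hi ↦ by simpa using mod_cast Int.one_le_abs (Int.cast_ne_zero.1 hi))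
    (fun i ↦ by simpa using mod_cast hx_le i)
end

section
/- For every positive integer c there exists a constant C > 0 such that the following holds: for every finite set W of nonnegative real numbers with |W| ≥ 2, letting A(W) = { |∑_{w∈W} d(w)·w| : d : W → ℤ with |d(w)| ≤ c for all w }, the number of distinct values of ⌊log₂ y⌋ over nonzero y ∈ A(W) is at most C·|W|·log₂|W|. -/
/-! Keep only the scales of one parity, which loses a factor of at most two, and for each of the
`m` remaining scales `k` choose a sum `y k = ∑ d k i • v i` realising it, with `|d k i| ≤ c`. These
sums are superincreasing in norm, so their `2 ^ m` subset sums are pairwise distinct. Each subset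
sum is again an integer combination of the `n` vectors `v i`, with coefficients of size at most
`c * m`, so there are at most `(2 * c * m + 1) ^ n` of them. Thus `2 ^ m ≤ (2 * c * m + 1) ^ n`,
which forces `m = O(n log n)`. -/

open scoped Finset

section DistinctSubsetSums

variable {κ E : Type*} [LinearOrder κ] [SeminormedAddCommGroup E]

lemma sum_injOn_powerset_of_superincreasing {S : Finset κ} {y : κ → E}
    (hy : ∀ t ∈ S, ∑ k ∈ S with k < t, ‖y k‖ < ‖y t‖) :
    Set.InjOn (fun T ↦ ∑ k ∈ T, y k) (S.powerset : Set (Finset κ)) := by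
  intro T hT T' hT' (hsum : ∑ k ∈ T, y k = ∑ k ∈ T', y k)
  simp only [Finset.coe_powerset, Set.mem_preimage, Set.mem_powerset_iff, Finset.coe_subset]
    at hT hT'
  by_contra hne
  obtain ⟨t, ht, hmax⟩ := (symmDiff T T').exists_max_image id (Finset.symmDiff_nonempty.2 hne)
  simp only [id] at hmax
  wlog htT : t ∈ T generalizing T T'
  · rw [symmDiff_comm] at ht hmax
    exact this hsum.symm hT' hT (Ne.symm hne) ht hmax (by grind [Finset.mem_symmDiff])
  have htd : t ∈ T \ T' := by grind [Finset.mem_symmDiff]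
  have hyt : y t = ∑ k ∈ T' \ T, y k - ∑ k ∈ (T \ T').erase t, y k := by
    rw [← Finset.sum_sdiff_eq_sum_sdiff_iff.2 hsum, ← Finset.add_sum_erase _ _ htd,
      add_sub_cancel_right]
  have hdisj : Disjoint (T' \ T) ((T \ T').erase t) := by
    grind [Finset.disjoint_left]
  have hsub : T' \ T ∪ (T \ T').erase t ⊆ {k ∈ S | k < t} := by
    intro k hk
    have hkle : k ≤ t := hmax k (by grind [Finset.mem_symmDiff])
    grind
  refine (hy t (hT htT)).not_ge ?_
  calc ‖y t‖ ≤ ∑ k ∈ T' \ T, ‖y k‖ + ∑ k ∈ (T \ T').erase t, ‖y k‖ := by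
        rw [hyt]
        exact (norm_sub_le _ _).trans (add_le_add (norm_sum_le _ _) (norm_sum_le _ _))
    _ = ∑ k ∈ T' \ T ∪ (T \ T').erase t, ‖y k‖ := (Finset.sum_union hdisj).symm
    _ ≤ ∑ k ∈ S with k < t, ‖y k‖ :=
        Finset.sum_le_sum_of_subset_of_nonneg hsub fun _ _ _ ↦ norm_nonneg _

end DistinctSubsetSums

lemma two_pow_card_le_of_sum_injOn {ι κ E : Type*} [AddCommGroup E] {c : ℕ} {s : Finset ι}
    {S : Finset κ} {v : ι → E} {d : κ → ι → ℤ} (hd : ∀ k ∈ S, ∀ i ∈ s, |d k i| ≤ c)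
    (hinj : Set.InjOn (fun T ↦ ∑ k ∈ T, ∑ i ∈ s, d k i • v i) (S.powerset : Set (Finset κ))) :
    2 ^ #S ≤ (2 * c * #S + 1) ^ #s := by
  classical
  set box := s.pi fun _ ↦ Finset.Icc (-(c * #S : ℤ)) (c * #S)
  have hbox : #box = (2 * c * #S + 1) ^ #s := by
    have : (c * #S + 1 - -(c * #S) : ℤ).toNat = 2 * c * #S + 1 := by lia
    simp only [box, Finset.card_pi, Int.card_Icc, this, Finset.prod_const]
  rw [← hbox, ← Finset.card_powerset]
  refine Finset.card_le_card_of_injOn (fun T i _ ↦ ∑ k ∈ T, d k i) ?_ ?_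
  · intro T hT
    have hT : T ⊆ S := by simpa using hT
    refine Finset.mem_pi.2 fun i hi ↦ Finset.mem_Icc.2 (abs_le.1 ?_)
    calc |∑ k ∈ T, d k i| ≤ ∑ k ∈ T, |d k i| := Finset.abs_sum_le_sum_abs _ _
      _ ≤ #T • (c : ℤ) := Finset.sum_le_card_nsmul _ _ _ fun k hk ↦ hd k (hT hk) i hi
      _ ≤ c * #S := by
        rw [nsmul_eq_mul, mul_comm]
        gcongr
  · intro T hT T' hT' hcoeff
    refine hinj hT hT' ?_
    simp only [Finset.sum_comm (t := s), ← Finset.sum_smul]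
    exact Finset.sum_congr rfl fun i hi ↦ congrArg (· • v i) (congrFun₂ hcoeff i hi)

section GappedScales

lemma sum_two_zpow_succ_lt_of_gapped {K : Type*} [Field K] [LinearOrder K]
    [IsStrictOrderedRing K] {S : Finset ℤ} (hS : ∀ i ∈ S, ∀ j ∈ S, i < j → i + 2 ≤ j) {t : ℤ}
    (ht : ∀ k ∈ S, k + 2 ≤ t) : ∑ k ∈ S, (2 : K) ^ (k + 1) < 2 ^ t := by
  induction S using Finset.induction_on_max generalizing t with
  | empty => simpa using zpow_pos (two_pos (α := K)) t
  | insert a S ha ih =>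
    have hlt : ∑ k ∈ S, (2 : K) ^ (k + 1) < 2 ^ a :=
      ih (by grind) fun k hk ↦ hS k (by grind) a (by grind) (ha k hk)
    have hat : (2 : K) ^ (a + 2) ≤ 2 ^ t := zpow_le_zpow_right₀ one_le_two (ht a (by grind))
    have hpos : (0 : K) < 2 ^ a := zpow_pos two_pos a
    rw [zpow_add₀ two_ne_zero] at hat
    rw [Finset.sum_insert fun h ↦ (ha a h).false, zpow_add_one₀ two_ne_zero]
    linarith

lemma exists_gapped_subset_card_le_two_mul (S : Finset ℤ) :
    ∃ T ⊆ S, (∀ i ∈ T, ∀ j ∈ T, i < j → i + 2 ≤ j) ∧ #S ≤ 2 * #T := by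
  have hcard := S.card_filter_add_card_filter_not fun k ↦ Even k
  rcases le_total #{k ∈ S | Even k} #{k ∈ S | ¬ Even k} with hle | hle
  · exact ⟨{k ∈ S | ¬ Even k}, S.filter_subset _, by grind, by lia⟩
  · exact ⟨{k ∈ S | Even k}, S.filter_subset _, by grind, by lia⟩

end GappedScales

section LogarithmicBound

lemma zpow_floor_logb_le_and_lt {b x : ℝ} (hb : 1 < b) (hx : 0 < x) :
    b ^ ⌊Real.logb b x⌋ ≤ x ∧ x < b ^ (⌊Real.logb b x⌋ + 1) := by
  rw [← Real.rpow_intCast, ← Real.rpow_intCast, ← Real.le_logb_iff_rpow_le hb hx,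
    ← Real.logb_lt_iff_lt_rpow hb hx]
  exact ⟨Int.floor_le _, by push_cast; exact Int.lt_floor_add_one _⟩

lemma logb_two_le_self {x : ℝ} (hx : 0 < x) : Real.logb 2 x ≤ x := by
  have hlog := Real.log_le_sub_one_of_pos (half_pos hx)
  rw [Real.log_div hx.ne' two_ne_zero] at hlog
  rw [Real.logb, div_le_iff₀ (Real.log_pos one_lt_two)]
  -- `log x ≤ x / 2 - 1 + log 2 ≤ x * log 2`, because `1 / 2 < log 2 < 1`
  nlinarith [Real.log_two_gt_d9, Real.log_two_lt_d9]

lemma le_of_le_mul_logb_two {a m n : ℝ} (ha : 0 < a) (hm : 0 < m) (hn : 0 < n)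
    (h : m ≤ n * Real.logb 2 (a * m)) :
    m ≤ 2 * n * (Real.logb 2 a + Real.logb 2 n + 1) := by
  have hsplit : Real.logb 2 (a * m)
      = Real.logb 2 a + Real.logb 2 n + 1 + Real.logb 2 (m / (2 * n)) := by
    rw [show a * m = a * n * 2 * (m / (2 * n)) by field_simp,
      Real.logb_mul (by positivity) (by positivity), Real.logb_mul (by positivity) two_ne_zero,
      Real.logb_mul ha.ne' hn.ne', Real.logb_self_eq_one one_lt_two]
  have hself : n * Real.logb 2 (m / (2 * n)) ≤ m / 2 := by
    calc n * Real.logb 2 (m / (2 * n)) ≤ n * (m / (2 * n)) := by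
          gcongr
          exact logb_two_le_self (by positivity)
      _ = m / 2 := by field_simp
  rw [hsplit] at h
  linarith

lemma le_of_two_pow_le_linear_pow {c m n : ℕ} (hn : 2 ≤ n)
    (h : 2 ^ m ≤ (2 * c * m + 1) ^ n) :
    (m : ℝ) ≤ 2 * (Real.logb 2 (2 * c + 1) + 2) * n * Real.logb 2 n := by
  have hlogn : 1 ≤ Real.logb 2 n := by
    rw [Real.le_logb_iff_rpow_le one_lt_two (by positivity), Real.rpow_one]
    exact_mod_cast hn
  have hlogc : 0 ≤ Real.logb 2 (2 * c + 1) :=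
    Real.logb_nonneg one_lt_two (by linarith [c.cast_nonneg (α := ℝ)])
  rcases m.eq_zero_or_pos with rfl | hm
  · push_cast
    positivity
  have hpow : (2 : ℝ) ^ m ≤ ((2 * c + 1) * m) ^ n := by
    have : 2 * c * m + 1 ≤ (2 * c + 1) * m := by lia
    exact_mod_cast h.trans (Nat.pow_le_pow_left this n)
  have hlog : (m : ℝ) ≤ n * Real.logb 2 ((2 * c + 1) * m) := by
    simpa [Real.logb_pow] using Real.logb_le_logb_of_le one_lt_two (by positivity) hpow
  calc (m : ℝ) ≤ 2 * n * (Real.logb 2 (2 * c + 1) + Real.logb 2 n + 1) :=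
        le_of_le_mul_logb_two (by positivity) (by positivity) (by positivity) hlog
    _ ≤ 2 * n * ((Real.logb 2 (2 * c + 1) + 2) * Real.logb 2 n) := by
        gcongr
        nlinarith
    _ = 2 * (Real.logb 2 (2 * c + 1) + 2) * n * Real.logb 2 n := by ring

end LogarithmicBound

lemma finite_and_ncard_le_of_forall_card_le {α : Type*} {M : Set α} {B : ℝ}
    (h : ∀ S : Finset α, ↑S ⊆ M → (#S : ℝ) ≤ B) : M.Finite ∧ (M.ncard : ℝ) ≤ B := by
  have hfin : M.Finite := by
    by_contra hinf
    obtain ⟨N, hN⟩ := exists_nat_gt B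
    obtain ⟨S, hSM, rfl⟩ := Set.Infinite.exists_subset_card_eq hinf N
    exact hN.not_ge (h S hSM)
  refine ⟨hfin, ?_⟩
  rw [Set.ncard_eq_toFinset_card M hfin]
  exact h _ hfin.coe_toFinset.subset

section SignedSumScales

variable {ι E : Type*} [SeminormedAddCommGroup E]

/-- The binary scales `⌊log₂ ‖y‖⌋`, that is, the positions of the most significant bit, of the
combinations `y = ∑ i ∈ s, d i • v i` of nonzero norm whose coefficients are integers of absolute
value at most `c`. -/
def signedSumScales (c : ℕ) (s : Finset ι) (v : ι → E) : Set ℤ :=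
  {m | ∃ d : ι → ℤ, (∀ i ∈ s, |d i| ≤ c) ∧ ‖∑ i ∈ s, d i • v i‖ ≠ 0 ∧
    m = ⌊Real.logb 2 ‖∑ i ∈ s, d i • v i‖⌋}

lemma two_pow_card_le_of_gapped_signedSumScales {c : ℕ} {s : Finset ι} {v : ι → E}
    {S : Finset ℤ} (hSM : ↑S ⊆ signedSumScales c s v)
    (hS : ∀ i ∈ S, ∀ j ∈ S, i < j → i + 2 ≤ j) : 2 ^ #S ≤ (2 * c * #S + 1) ^ #s := by
  choose! d hd hne hfloor using fun k (hk : k ∈ S) ↦ hSM hk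
  have hscale : ∀ k ∈ S, (2 : ℝ) ^ k ≤ ‖∑ i ∈ s, d k i • v i‖ ∧
      ‖∑ i ∈ s, d k i • v i‖ < 2 ^ (k + 1) := fun k hk ↦ by
    have h := zpow_floor_logb_le_and_lt one_lt_two (lt_of_le_of_ne' (norm_nonneg _) (hne k hk))
    rwa [← hfloor k hk] at h
  refine two_pow_card_le_of_sum_injOn (v := v) hd
    (sum_injOn_powerset_of_superincreasing fun t ht ↦ ?_)
  calc ∑ k ∈ S with k < t, ‖∑ i ∈ s, d k i • v i‖ ≤ ∑ k ∈ S with k < t, (2 : ℝ) ^ (k + 1) :=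
        Finset.sum_le_sum fun k hk ↦ (hscale k (Finset.mem_of_mem_filter k hk)).2.le
    _ < 2 ^ t := sum_two_zpow_succ_lt_of_gapped (by grind) (by grind)
    _ ≤ ‖∑ i ∈ s, d t i • v i‖ := (hscale t ht).1

theorem msb_count_of_signed_subset_sums_general (c : ℕ) {s : Finset ι} (v : ι → E)
    (hs : 2 ≤ #s) :
    (signedSumScales c s v).Finite ∧ ((signedSumScales c s v).ncard : ℝ) ≤
      4 * (Real.logb 2 (2 * c + 1) + 2) * #s * Real.logb 2 #s := by
  refine finite_and_ncard_le_of_forall_card_le fun S hSM ↦ ?_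
  obtain ⟨T, hTS, hgap, hcard⟩ := exists_gapped_subset_card_le_two_mul S
  have hT := le_of_two_pow_le_linear_pow hs
    (two_pow_card_le_of_gapped_signedSumScales (fun k hk ↦ hSM (hTS hk)) hgap)
  have hcard : (#S : ℝ) ≤ 2 * #T := mod_cast hcard
  linarith

end SignedSumScales

/-- Combinatorial bound on the number of distinct binary scales of bounded-coefficient
signed subset sums: for every positive integer `c` there is a constant `C > 0` such that
for any finite set `W` of nonnegative reals with `|W| ≥ 2`, the set of values
`⌊log₂ y⌋` over nonzero `y ∈ A(W)` is finite with at most `C · |W| · log₂ |W|` elements,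
where `A(W) = { |∑_{w ∈ W} d(w)·w| : d : W → ℤ, |d(w)| ≤ c }`. -/
theorem msb_count_of_signed_subset_sums (c : ℕ) (hc : 0 < c) :
    ∃ C : ℝ, 0 < C ∧
      ∀ W : Finset ℝ, (∀ w ∈ W, 0 ≤ w) → 2 ≤ W.card →
        ∀ M : Set ℤ,
          M = {m : ℤ | ∃ d : ℝ → ℤ, (∀ w ∈ W, |d w| ≤ (c : ℤ)) ∧
                (∑ w ∈ W, (d w : ℝ) * w) ≠ 0 ∧
                m = ⌊Real.logb 2 |∑ w ∈ W, (d w : ℝ) * w|⌋} →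
          M.Finite ∧ (M.ncard : ℝ) ≤ C * W.card * Real.logb 2 W.card := by
  have hlog : 0 ≤ Real.logb 2 (2 * c + 1) := Real.logb_nonneg one_lt_two (by simp)
  refine ⟨4 * (Real.logb 2 (2 * c + 1) + 2), by positivity, fun W _ hW M hM ↦ ?_⟩
  simpa [hM, signedSumScales] using msb_count_of_signed_subset_sums_general c id hW
end

section
/- For all integers p ≥ 1 and n ≥ 1, the greedy remainder satisfies n − (⌊n^{1/p}⌋)^p < 2^p · n^{(p−1)/p}, where n^{1/p} and n^{(p−1)/p} denote real powers of n and ⌊·⌋ is the integer floor. -/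
theorem pow_sub_floor_pow_le {R : Type*} [CommRing R] [LinearOrder R] [IsOrderedRing R]
    [FloorRing R] {a : R} (ha : 0 ≤ a) (n : ℕ) :
    a ^ n - (⌊a⌋ : R) ^ n ≤ n * a ^ (n - 1) := by
  have floor_nonneg : (0 : R) ≤ ⌊a⌋ := Int.cast_nonneg (Int.floor_nonneg.mpr ha)
  calc a ^ n - (⌊a⌋ : R) ^ n
      ≤ |a - ⌊a⌋| * n * max |a| |(⌊a⌋ : R)| ^ (n - 1) :=
        (le_abs_self _).trans (abs_pow_sub_pow_le ..)
    _ = Int.fract a * n * a ^ (n - 1) := by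
        rw [Int.self_sub_floor, Int.abs_fract, abs_of_nonneg ha, abs_of_nonneg floor_nonneg,
          max_eq_left (Int.floor_le a)]
    _ ≤ 1 * n * a ^ (n - 1) := by
        gcongr
        exact (Int.fract_lt_one a).le
    _ = n * a ^ (n - 1) := by rw [one_mul]

theorem greedy_remainder_bound_general {p : ℕ} (hp : 1 ≤ p) {x : ℝ} (hx : 0 ≤ x) :
    x - (⌊x ^ ((1 : ℝ) / p)⌋ : ℝ) ^ p ≤ p * x ^ (((p : ℝ) - 1) / p) := by
  have root_pow : (x ^ ((1 : ℝ) / p)) ^ p = x := by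
    rw [one_div, Real.rpow_inv_natCast_pow hx (Nat.one_le_iff_ne_zero.mp hp)]
  have root_pow_pred : (x ^ ((1 : ℝ) / p)) ^ (p - 1) = x ^ (((p : ℝ) - 1) / p) := by
    rw [← Real.rpow_mul_natCast hx, Nat.cast_pred hp, one_div_mul_eq_div]
  simpa only [root_pow, root_pow_pred] using
    pow_sub_floor_pow_le (Real.rpow_nonneg hx ((1 : ℝ) / p)) p

/-- The greedy remainder bound: for integers `p ≥ 1` and `n ≥ 1`,
`n − ⌊n^{1/p}⌋^p < 2^p · n^{(p−1)/p}`. -/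
theorem greedy_remainder_bound (p n : ℕ) (hp : 1 ≤ p) (hn : 1 ≤ n) :
    (n : ℝ) - (⌊(n : ℝ) ^ ((1 : ℝ) / p)⌋ : ℝ) ^ p
      < 2 ^ p * (n : ℝ) ^ (((p : ℝ) - 1) / p) :=
  (greedy_remainder_bound_general hp n.cast_nonneg).trans_lt <|
    mul_lt_mul_of_pos_right (mod_cast p.lt_two_pow_self) (by positivity)
end

section
/- Let p, q ≥ 1 be coprime integers and k a positive integer such that q divides k·p + 1. Let a_1, …, a_n be positive integers and α a real number. Define w = ∏_{j=1}^n a_j^k, and for each i define z_i = ∏_{j ≠ i} a_j^k and y_i = a_i^{(kp+1)/q} (an integer, since q divides kp+1). Suppose for each i there are nonnegative integers c_{i,1}, …, c_{i,m_i} with z_i = ∑_{j=1}^{m_i} c_{i,j}^q. Then ∑_{i=1}^n a_i^{1/p} ≥ α if and only if ∑_{i=1}^n ∑_{j=1}^{m_i} (c_{i,j}^p · y_i)^{q/p} ≥ w·α, where x^{1/p} and x^{q/p} denote real powers of the nonnegative real x. -/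
/-!
Scaling the root `a i ^ (1 / p)` by `w = ∏ j, a j ^ k` gives `z i * a i ^ k * a i ^ (1 / p)`.
Since `k + 1 / p = ((k * p + 1) / q) * (q / p)`, the last two factors are `y i ^ (q / p)`, and
`z i = ∑ j, c i j ^ q` with `c i j ^ q = (c i j ^ p) ^ (q / p)` distributes this product over the
inner sum. So the sum on the right is the sum of the roots multiplied by `w > 0`.
-/

section RealExponents

variable {p q k : ℝ}

theorem rpow_mul_rpow_rpow_div (hp : p ≠ 0) (hq : q ≠ 0) {a c : ℝ} (ha : 0 < a) (hc : 0 ≤ c) :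
    (c ^ p * a ^ ((k * p + 1) / q)) ^ (q / p) = c ^ q * (a ^ k * a ^ (1 / p)) := by
  have hc_exp : p * (q / p) = q := mul_div_cancel₀ q hp
  have ha_exp : (k * p + 1) / q * (q / p) = k + 1 / p := by field_simp
  rw [Real.mul_rpow (by positivity) (by positivity), ← Real.rpow_mul hc, ← Real.rpow_mul ha.le,
    hc_exp, ha_exp, Real.rpow_add ha]

variable {ι : Type*} [DecidableEq ι] {κ : ι → Type*} {s : Finset ι} {t : ∀ i, Finset (κ i)}
  {a : ι → ℝ} {c : ∀ i, κ i → ℝ}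

theorem sum_sum_rpow_eq_prod_mul_sum_root (hp : p ≠ 0) (hq : q ≠ 0)
    (ha : ∀ i ∈ s, 0 < a i) (hc : ∀ i ∈ s, ∀ j ∈ t i, 0 ≤ c i j)
    (hz : ∀ i ∈ s, ∏ j ∈ s.erase i, a j ^ k = ∑ j ∈ t i, c i j ^ q) :
    ∑ i ∈ s, ∑ j ∈ t i, (c i j ^ p * a i ^ ((k * p + 1) / q)) ^ (q / p) =
      (∏ j ∈ s, a j ^ k) * ∑ i ∈ s, a i ^ (1 / p) := by
  rw [Finset.mul_sum]
  refine Finset.sum_congr rfl fun i hi ↦ ?_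
  calc ∑ j ∈ t i, (c i j ^ p * a i ^ ((k * p + 1) / q)) ^ (q / p)
      = ∑ j ∈ t i, c i j ^ q * (a i ^ k * a i ^ (1 / p)) :=
        Finset.sum_congr rfl fun j hj ↦ rpow_mul_rpow_rpow_div hp hq (ha i hi) (hc i hi j hj)
    _ = (∏ j ∈ s.erase i, a j ^ k) * a i ^ k * a i ^ (1 / p) := by
        rw [← Finset.sum_mul, ← hz i hi, mul_assoc]
    _ = (∏ j ∈ s, a j ^ k) * a i ^ (1 / p) := by
        rw [Finset.prod_erase_mul s (fun j ↦ a j ^ k) hi]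

theorem root_sum_reduction_general (hp : 0 < p) (hq : 0 < q)
    (ha : ∀ i ∈ s, 0 < a i) (hc : ∀ i ∈ s, ∀ j ∈ t i, 0 ≤ c i j)
    (hz : ∀ i ∈ s, ∏ j ∈ s.erase i, a j ^ k = ∑ j ∈ t i, c i j ^ q) (α : ℝ) :
    α ≤ ∑ i ∈ s, a i ^ (1 / p) ↔
      (∏ j ∈ s, a j ^ k) * α ≤
        ∑ i ∈ s, ∑ j ∈ t i, (c i j ^ p * a i ^ ((k * p + 1) / q)) ^ (q / p) := by
  have hw : 0 < ∏ j ∈ s, a j ^ k := Finset.prod_pos fun j hj ↦ Real.rpow_pos_of_pos (ha j hj) k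
  rw [sum_sum_rpow_eq_prod_mul_sum_root hp.ne' hq.ne' ha hc hz, mul_le_mul_iff_right₀ hw]

end RealExponents

/-- Reduction of `p`-ROOT-SUM to `p/q`-ROOT-SUM: with `w = ∏ a_j^k`,
`z_i = ∏_{j≠i} a_j^k`, `y_i = a_i^{(kp+1)/q}`, and decompositions
`z_i = ∑_j c_{i,j}^q`, we have
`∑ a_i^{1/p} ≥ α ↔ ∑_i ∑_j (c_{i,j}^p · y_i)^{q/p} ≥ w·α`. -/
theorem root_sum_reduction (p q k : ℕ) (hp : 1 ≤ p) (hq : 1 ≤ q)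
    (hpq : Nat.Coprime p q) (hk : 0 < k) (hdvd : q ∣ k * p + 1)
    (n : ℕ) (a : Fin n → ℕ) (ha : ∀ i, 0 < a i) (α : ℝ)
    (m : Fin n → ℕ) (c : (i : Fin n) → Fin (m i) → ℕ)
    (hz : ∀ i, (∏ j ∈ Finset.univ.erase i, a j ^ k) = ∑ j, c i j ^ q) :
    (α ≤ ∑ i, (a i : ℝ) ^ ((1 : ℝ) / p)) ↔
      ((∏ j, a j ^ k : ℕ) : ℝ) * α
        ≤ ∑ i, ∑ j, ((c i j ^ p * a i ^ ((k * p + 1) / q) : ℕ) : ℝ) ^ ((q : ℝ) / p) := by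
  have hy : (((k * p + 1) / q : ℕ) : ℝ) = ((k : ℝ) * p + 1) / q := by
    simp [Nat.cast_div hdvd (show (q : ℝ) ≠ 0 by positivity)]
  simpa [← Real.rpow_natCast, hy] using
    root_sum_reduction_general (p := p) (q := q) (k := k) (by positivity) (by positivity)
      (fun i _ ↦ Nat.cast_pos.mpr (ha i)) (fun i _ j _ ↦ Nat.cast_nonneg (c i j))
      (fun i _ ↦ by simpa only [Real.rpow_natCast] using mod_cast hz i) α
end

section
/- Let M ≥ 1 be an integer, p ≥ 2 an integer, and set δ = 1/(2M) and q = p/(p−1). Let u : Fin M → ℝ with u(k) ≥ 0 for all k, and define v : Fin M ⊕ Fin M → ℝ by v(inl k) = u(k)^{p−1} and v(inr k) = −u(k)^{p−1}. Then the maximum of ∑_j d(j)·v(j) over all d : Fin M ⊕ Fin M → ℝ satisfying (∑_j |d(j)|^p)^{1/p} ≤ δ, ∑_j d(j) = 0, and d(j) ≥ −δ for all j, equals δ · (∑_j |v(j)|^q)^{1/q}. -/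
/-!
Equality in Hölder's inequality `∑ dⱼ vⱼ ≤ ‖d‖ₚ ‖v‖_q` is attained at the multiples of
`|vⱼ|^(q - 2) * vⱼ`, an odd function of `vⱼ`. When `v` consists of opposite pairs, these
multiples have zero sum, so the constraint `∑ dⱼ = 0` does not lower the maximum; neither does
`-δ ≤ dⱼ`, which already follows from `‖d‖ₚ ≤ δ`.
-/

/-- The signed power `sign t * |t| ^ r`. It is written without the sign function, so that oddness
is immediate; at `t = 0` its value is `0`. With `r = q - 1` it is applied coordinatewise to a
vector of `ℓ^q` to obtain the direction in `ℓ^p` that attains equality in Hölder's inequality. -/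
noncomputable def signedPow (r t : ℝ) : ℝ := |t| ^ (r - 1) * t

theorem signedPow_odd (r : ℝ) : Function.Odd (signedPow r) := fun t => by
  simp only [signedPow, abs_neg, mul_neg]

theorem abs_signedPow {r : ℝ} (hr : r ≠ 0) (t : ℝ) : |signedPow r t| = |t| ^ r := by
  rw [signedPow, abs_mul, Real.abs_rpow_of_nonneg (abs_nonneg t), abs_abs,
    ← Real.rpow_add_one' (abs_nonneg t) (by simpa using hr), sub_add_cancel]

theorem signedPow_mul_self {r : ℝ} (hr : r + 1 ≠ 0) (t : ℝ) :
    signedPow r t * t = |t| ^ (r + 1) := by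
  have hexp : r + 1 = r - 1 + (2 : ℕ) := by push_cast; ring
  rw [hexp] at hr ⊢
  rw [Real.rpow_add_natCast' (abs_nonneg t) hr, sq_abs, signedPow, mul_assoc, pow_two]

theorem sum_comp_sumElim_neg {ι G H : Type*} [Fintype ι] [Neg G] [AddCommGroup H] {f : G → H}
    (hf : Function.Odd f) (w : ι → G) : ∑ j, f (Sum.elim w (fun k => -w k) j) = 0 := by
  simp only [Fintype.sum_sum_type, Sum.elim_inl, Sum.elim_inr, hf _, Finset.sum_neg_distrib,
    add_neg_cancel]

section Holder

variable {ι : Type*} [Fintype ι] {p q : ℝ}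

theorem abs_le_Lp (hp : 0 < p) (d : ι → ℝ) (j : ι) : |d j| ≤ (∑ i, |d i| ^ p) ^ (1 / p) := by
  rw [one_div, Real.le_rpow_inv_iff_of_pos (abs_nonneg _) (by positivity) hp]
  exact Finset.single_le_sum (f := fun i => |d i| ^ p) (fun i _ => by positivity)
    (Finset.mem_univ j)

theorem Lp_const_mul (hp : p ≠ 0) (c : ℝ) (d : ι → ℝ) :
    (∑ j, |c * d j| ^ p) ^ (1 / p) = |c| * (∑ j, |d j| ^ p) ^ (1 / p) := by
  simp only [abs_mul, Real.mul_rpow (abs_nonneg _) (abs_nonneg _), ← Finset.mul_sum]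
  rw [Real.mul_rpow (by positivity) (by positivity), one_div, Real.rpow_rpow_inv (abs_nonneg c) hp]

theorem sum_abs_signedPow_rpow (hpq : p.HolderConjugate q) (v : ι → ℝ) :
    ∑ j, |signedPow (q - 1) (v j)| ^ p = ∑ j, |v j| ^ q := by
  simp only [abs_signedPow hpq.symm.sub_one_ne_zero, ← Real.rpow_mul (abs_nonneg _),
    hpq.symm.sub_one_mul_conj]

theorem sum_signedPow_mul_self (hpq : p.HolderConjugate q) (v : ι → ℝ) :
    ∑ j, signedPow (q - 1) (v j) * v j = ∑ j, |v j| ^ q := by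
  have hq : q - 1 + 1 ≠ 0 := by simpa only [sub_add_cancel] using hpq.symm.ne_zero
  simp only [signedPow_mul_self hq, sub_add_cancel]

theorem exists_const_mul_signedPow_Lp_le_and_sum_mul_eq (hpq : p.HolderConjugate q) {δ : ℝ}
    (hδ : 0 ≤ δ) (v : ι → ℝ) :
    ∃ c : ℝ, (∑ j, |c * signedPow (q - 1) (v j)| ^ p) ^ (1 / p) ≤ δ ∧
      ∑ j, c * signedPow (q - 1) (v j) * v j = δ * (∑ j, |v j| ^ q) ^ (1 / q) := by
  set S := ∑ j, |v j| ^ q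
  have hS : 0 ≤ S := by positivity
  have hq : 1 - 1 / p = 1 / q := by simpa only [one_div] using hpq.one_sub_inv
  -- For `v = 0` the quotient is `0` by `x / 0 = 0`, and this choice still works.
  refine ⟨δ / S ^ (1 / p), ?_, ?_⟩
  · rw [Lp_const_mul hpq.ne_zero, sum_abs_signedPow_rpow hpq, abs_of_nonneg (by positivity),
      div_mul_eq_mul_div, mul_div_assoc]
    exact mul_le_of_le_one_right hδ (div_self_le_one _)
  · calc ∑ j, δ / S ^ (1 / p) * signedPow (q - 1) (v j) * v j
        = δ / S ^ (1 / p) * S := by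
          simp only [mul_assoc, ← Finset.mul_sum, sum_signedPow_mul_self hpq, S]
      _ = δ * (S ^ (1 : ℝ) / S ^ (1 / p)) := by rw [Real.rpow_one]; ring
      _ = δ * S ^ (1 / q) := by
          rw [← Real.rpow_sub' hS (hq ▸ one_div_ne_zero hpq.symm.ne_zero), hq]

theorem holder_gadget_max_general (hpq : p.HolderConjugate q) {δ : ℝ} (hδ : 0 ≤ δ) {v : ι → ℝ}
    (hv : ∑ j, signedPow (q - 1) (v j) = 0) :
    IsGreatest
      {x : ℝ | ∃ d : ι → ℝ,
        (∑ j, |d j| ^ p) ^ (1 / p) ≤ δ ∧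
        (∑ j, d j) = 0 ∧
        (∀ j, -δ ≤ d j) ∧
        x = ∑ j, d j * v j}
      (δ * (∑ j, |v j| ^ q) ^ (1 / q)) := by
  constructor
  · obtain ⟨c, hnorm, hsum⟩ := exists_const_mul_signedPow_Lp_le_and_sum_mul_eq hpq hδ v
    refine ⟨fun j => c * signedPow (q - 1) (v j), hnorm, ?_, fun j => ?_, hsum.symm⟩
    · rw [← Finset.mul_sum, hv, mul_zero]
    · exact neg_le_of_abs_le ((abs_le_Lp hpq.pos _ j).trans hnorm)
  · rintro _ ⟨d, hnorm, -, -, rfl⟩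
    exact (Real.inner_le_Lp_mul_Lq Finset.univ d v hpq).trans
      (mul_le_mul_of_nonneg_right hnorm (by positivity))

end Holder

/-- Hölder attainment for the symmetric gadget: with `δ = 1/(2M)`, `q = p/(p−1)`,
`u ≥ 0`, and `v(inl k) = u(k)^{p−1}`, `v(inr k) = −u(k)^{p−1}`, the maximum of
`∑ d(j) v(j)` over all `d` with `(∑ |d(j)|^p)^{1/p} ≤ δ`, `∑ d(j) = 0`, and `d(j) ≥ −δ`
equals `δ · (∑ |v(j)|^q)^{1/q}`. -/
theorem holder_gadget_max (M p : ℕ) (hM : 1 ≤ M) (hp : 2 ≤ p)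
    (δ : ℝ) (hδ : δ = 1 / (2 * (M : ℝ)))
    (u : Fin M → ℝ) (hu : ∀ k, 0 ≤ u k)
    (v : (Fin M ⊕ Fin M) → ℝ)
    (hv : v = Sum.elim (fun k => u k ^ (p - 1)) (fun k => -(u k ^ (p - 1)))) :
    IsGreatest
      {x : ℝ | ∃ d : (Fin M ⊕ Fin M) → ℝ,
        (∑ j, |d j| ^ (p : ℝ)) ^ ((1 : ℝ) / p) ≤ δ ∧
        (∑ j, d j) = 0 ∧
        (∀ j, -δ ≤ d j) ∧
        x = ∑ j, d j * v j}
      (δ * (∑ j, |v j| ^ ((p : ℝ) / ((p : ℝ) - 1))) ^ (((p : ℝ) - 1) / (p : ℝ))) := by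
  have hpq : (p : ℝ).HolderConjugate (p / (p - 1)) := .conjExponent (by exact_mod_cast hp)
  simpa only [one_div_div, hv] using holder_gadget_max_general hpq (hδ ▸ by positivity : 0 ≤ δ)
    (sum_comp_sumElim_neg (signedPow_odd _) fun k => u k ^ (p - 1))
end
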